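/- Fix an integer k ≥ 2. Suppose that, as x → ∞, the number of integers n with 1 ≤ n ≤ x such that there exists a prime p with p^k > (log log x)^{0.9} and p^k ∣ s(n) is o(x). Then, as x → ∞, the number of integers n with 1 ≤ n ≤ x for which the equivalence "n is k-free if and only if s(n) is k-free" fails is o(x). -/

import Mathlib

open scoped Classical
open Filter Finset

/-- `sigma1 n` is `σ(n)`, the sum of all positive divisors of `n`. -/
def sigma1 (n : ℕ) : ℕ := ArithmeticFunction.sigma 1 n

/-- `s n` is the sum of the proper divisors of `n`, i.e. `σ(n) − n`. -/
def s (n : ℕ) : ℕ := sigma1 n - n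

/-- A positive integer `n` is `k`-free if no `k`-th power of a prime divides it. -/
def KFree (k n : ℕ) : Prop := ∀ p : ℕ, p.Prime → ¬ p ^ k ∣ n

open MeasureTheory Topology Asymptotics

/-! If `p ^ k ∣ σ(n)`, then `p ^ k ∣ n` and `p ^ k ∣ s(n)` are equivalent, so only the primes with
`p ^ k ∤ σ(n)` matter. Let `y = o(log log x)` tend to infinity. For `p ^ k > y` both divisibilities
are rare, the first trivially and the second by hypothesis. For `d ^ k ≤ y`, a prime
`q ≡ -1 (mod d)` with `q ∣ n` but `q ^ 2 ∤ n` contributes a factor divisible by `d` to `σ(n)`, and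
by Turán's variance inequality almost every `n` has at least `k` such primes. As `d` grows with `x`,
this needs a lower bound for the sum of `1 / q` over primes `q ≡ -1 (mod d)` that is uniform in `d`,
hence a lower bound `|L(u, χ)| ≫ N ^ (-4)` near `u = 1` for the nontrivial characters modulo `N`. If
`χ ^ 2 ≠ 1` it comes from the 3-4-1 inequality. If `χ` is quadratic, `∑ χ(n) x ^ n / (1 - x ^ n)` is
within `N` of `L(1, χ) / (1 - x)` and is at least `∑ x ^ (m ^ 2)`, which is of order
`(1 - x) ^ (-1/2)`, so `L(1, χ)` is not small. -/

/-! ### Dirichlet series with bounded partial sums -/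

section BoundedPartialSums

lemma integral_Ioi_one_rpow_neg {u : ℝ} (hu : 1 < u) :
    ∫ t in Set.Ioi (1 : ℝ), t ^ (-u) = 1 / (u - 1) := by
  rw [integral_Ioi_rpow_of_lt (by linarith) one_pos, Real.one_rpow, ← neg_div_neg_eq]
  ring

lemma integrableOn_Ioi_one_rpow_neg {u : ℝ} (hu : 1 < u) :
    IntegrableOn (fun t : ℝ => t ^ (-u)) (Set.Ioi 1) :=
  integrableOn_Ioi_rpow_of_lt (by linarith) one_pos

variable {S : ℕ → ℂ} {g : ℝ → ℝ} {B : ℝ}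

lemma norm_floor_mul_le (hS : ∀ n, ‖S n‖ ≤ B) (hg : ∀ t ∈ Set.Ioi (1 : ℝ), 0 ≤ g t) :
    ∀ᵐ t ∂volume.restrict (Set.Ioi 1), ‖S ⌊t⌋₊ * (g t : ℂ)‖ ≤ B * g t := by
  filter_upwards [ae_restrict_mem measurableSet_Ioi] with t ht
  rw [norm_mul, Complex.norm_real, Real.norm_of_nonneg (hg t ht)]
  exact mul_le_mul_of_nonneg_right (hS _) (hg t ht)

lemma integrableOn_floor_mul (hS : ∀ n, ‖S n‖ ≤ B) (hg : ∀ t ∈ Set.Ioi (1 : ℝ), 0 ≤ g t)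
    (hint : IntegrableOn g (Set.Ioi 1)) :
    IntegrableOn (fun t => S ⌊t⌋₊ * (g t : ℂ)) (Set.Ioi 1) := by
  refine (hint.const_mul B).mono' ?_ (norm_floor_mul_le hS hg)
  exact (measurable_from_nat.comp Nat.measurable_floor).aestronglyMeasurable.mul
    (Complex.continuous_ofReal.comp_aestronglyMeasurable hint.aestronglyMeasurable)

lemma norm_integral_floor_mul_le (hS : ∀ n, ‖S n‖ ≤ B) (hg : ∀ t ∈ Set.Ioi (1 : ℝ), 0 ≤ g t)
    (hint : IntegrableOn g (Set.Ioi 1)) :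
    ‖∫ t in Set.Ioi (1 : ℝ), S ⌊t⌋₊ * (g t : ℂ)‖ ≤ B * ∫ t in Set.Ioi (1 : ℝ), g t := by
  rw [← integral_const_mul]
  exact norm_integral_le_of_norm_le (hint.const_mul B) (norm_floor_mul_le hS hg)

variable {f : ℕ → ℂ} {u v : ℝ}

lemma LSeries_eq_mul_integral_of_sum_le (hf : ∀ n, ‖∑ k ∈ Icc 1 n, f k‖ ≤ B) (hu : 0 < u)
    (hsum : LSeriesSummable f u) :
    LSeries f u =
      u * ∫ t in Set.Ioi (1 : ℝ), (∑ k ∈ Icc 1 ⌊t⌋₊, f k) * ((t ^ (-(u + 1)) : ℝ) : ℂ) := by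
  rw [LSeries_eq_mul_integral f le_rfl (by simpa using hu) hsum]
  · congr 1
    refine setIntegral_congr_fun measurableSet_Ioi fun t ht => ?_
    have ht0 : (0 : ℝ) ≤ t := zero_le_one.trans (le_of_lt ht)
    simp only [Complex.ofReal_cpow ht0, Complex.ofReal_neg, Complex.ofReal_add, Complex.ofReal_one]
  · exact IsBigO.of_bound B (.of_forall fun n => by simpa using hf n)

lemma norm_LSeries_le_of_sum_le (hf : ∀ n, ‖∑ k ∈ Icc 1 n, f k‖ ≤ B) (hu : 0 < u)
    (hsum : LSeriesSummable f u) : ‖LSeries f u‖ ≤ B := by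
  have hint := norm_integral_floor_mul_le hf (fun t ht => Real.rpow_nonneg
    (zero_le_one.trans (le_of_lt ht)) (-(u + 1))) (integrableOn_Ioi_one_rpow_neg (by linarith))
  rw [integral_Ioi_one_rpow_neg (by linarith), add_sub_cancel_right] at hint
  rw [LSeries_eq_mul_integral_of_sum_le hf hu hsum, norm_mul, Complex.norm_real,
    Real.norm_of_nonneg hu.le]
  calc u * _ ≤ u * (B * (1 / u)) := by gcongr
    _ = B := by field_simp

lemma norm_LSeries_sub_le_of_sum_le (hf : ∀ n, ‖∑ k ∈ Icc 1 n, f k‖ ≤ B) (hu : 0 < u)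
    (huv : u ≤ v) (hsum : LSeriesSummable f u) (hsum' : LSeriesSummable f v) :
    ‖LSeries f u - LSeries f v‖ ≤ 2 * B * (v - u) / v := by
  have hv : 0 < v := hu.trans_le huv
  set M : ℝ → ℂ := fun w =>
    ∫ t in Set.Ioi (1 : ℝ), (∑ k ∈ Icc 1 ⌊t⌋₊, f k) * ((t ^ (-(w + 1)) : ℝ) : ℂ)
  have hpow {w : ℝ} : ∀ t ∈ Set.Ioi (1 : ℝ), 0 ≤ t ^ (-(w + 1)) := fun t ht =>
    Real.rpow_nonneg (zero_le_one.trans (le_of_lt ht)) _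
  have hint {w : ℝ} (hw : 0 < w) : IntegrableOn (fun t : ℝ => t ^ (-(w + 1))) (Set.Ioi 1) :=
    integrableOn_Ioi_one_rpow_neg (by linarith)
  have hLM : LSeries f u - LSeries f v = u * (M u - M v) - (v - u) * M v := by
    rw [LSeries_eq_mul_integral_of_sum_le hf hu hsum, LSeries_eq_mul_integral_of_sum_le hf hv hsum']
    ring
  have hMv : ‖M v‖ ≤ B * (1 / v) := by
    have := norm_integral_floor_mul_le hf hpow (hint hv)
    rwa [integral_Ioi_one_rpow_neg (by linarith), add_sub_cancel_right] at this
  have hMuv : ‖M u - M v‖ ≤ B * (1 / u - 1 / v) := by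
    have hanti : ∀ t ∈ Set.Ioi (1 : ℝ), 0 ≤ t ^ (-(u + 1)) - t ^ (-(v + 1)) := fun t ht =>
      sub_nonneg.mpr (Real.rpow_le_rpow_of_exponent_le (le_of_lt ht) (by linarith))
    have := norm_integral_floor_mul_le hf hanti ((hint hu).sub (hint hv))
    simp only [Complex.ofReal_sub, mul_sub] at this
    rw [integral_sub (integrableOn_floor_mul hf hpow (hint hu))
      (integrableOn_floor_mul hf hpow (hint hv)), integral_sub (hint hu) (hint hv),
      integral_Ioi_one_rpow_neg (by linarith), integral_Ioi_one_rpow_neg (by linarith),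
      add_sub_cancel_right, add_sub_cancel_right] at this
    exact this
  calc ‖LSeries f u - LSeries f v‖ ≤ u * ‖M u - M v‖ + (v - u) * ‖M v‖ := by
        rw [hLM]
        refine (norm_sub_le _ _).trans (le_of_eq ?_)
        rw [norm_mul, norm_mul, ← Complex.ofReal_sub, Complex.norm_real, Complex.norm_real,
          Real.norm_of_nonneg hu.le, Real.norm_of_nonneg (sub_nonneg.mpr huv)]
    _ ≤ u * (B * (1 / u - 1 / v)) + (v - u) * (B * (1 / v)) := by
        gcongr
    _ = 2 * B * (v - u) / v := by
        field_simp
        ring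

end BoundedPartialSums

/-! ### Dirichlet L-functions on the real line -/

section RealZeta

variable {u : ℝ}

lemma antitoneOn_Ici_one_rpow_neg (hu : 0 ≤ u) :
    AntitoneOn (fun t : ℝ => t ^ (-u)) (Set.Ici ((1 : ℕ) : ℝ)) := fun a ha b _ hab =>
  Real.rpow_le_rpow_of_nonpos (zero_lt_one.trans_le (by simpa using ha)) hab (by linarith)

lemma rpow_neg_nonneg_of_mem_Ioi_one :
    ∀ t ∈ Set.Ioi ((1 : ℕ) : ℝ), 0 ≤ t ^ (-u) := fun _ ht =>
  Real.rpow_nonneg ((Nat.cast_nonneg 1).trans (le_of_lt ht)) _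

lemma tsum_rpow_neg_le (hu : 1 < u) : ∑' n : ℕ, (n : ℝ) ^ (-u) ≤ u / (u - 1) := by
  have hsum : Summable fun n : ℕ => (n : ℝ) ^ (-u) := Real.summable_nat_rpow.mpr (by linarith)
  have htail := AntitoneOn.tsum_comp_add_le_integral 1 (antitoneOn_Ici_one_rpow_neg (by linarith))
    (by simpa using integrableOn_Ioi_one_rpow_neg hu) rpow_neg_nonneg_of_mem_Ioi_one
  rw [Nat.cast_one, integral_Ioi_one_rpow_neg hu] at htail
  rw [← hsum.sum_add_tsum_nat_add 2, sum_range_succ, sum_range_one, Nat.cast_zero, Nat.cast_one,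
    Real.zero_rpow (by linarith), Real.one_rpow]
  have : 0 < u - 1 := by linarith
  calc _ ≤ 0 + 1 + 1 / (u - 1) := by gcongr
    _ = u / (u - 1) := by field_simp; ring

lemma le_tsum_rpow_neg (hu : 1 < u) : 1 / (u - 1) ≤ ∑' n : ℕ, (n : ℝ) ^ (-u) := by
  have hsum : Summable fun n : ℕ => (n : ℝ) ^ (-u) := Real.summable_nat_rpow.mpr (by linarith)
  have hle := AntitoneOn.integral_le_tsum_comp_add 1 (antitoneOn_Ici_one_rpow_neg (by linarith))
    hsum rpow_neg_nonneg_of_mem_Ioi_one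
  rw [Nat.cast_one, integral_Ioi_one_rpow_neg hu] at hle
  rw [← hsum.sum_add_tsum_nat_add 1, sum_range_one, Nat.cast_zero, Real.zero_rpow (by linarith),
    zero_add]
  exact hle

end RealZeta

section CharacterSums

variable {N : ℕ} {χ : DirichletCharacter ℂ N} {u v : ℝ}

lemma level_ne_one_of_ne_one (hχ : χ ≠ 1) : N ≠ 1 := by
  rintro rfl
  exact hχ χ.level_one

lemma LSeriesSummable_char_ofReal (χ : DirichletCharacter ℂ N) (hu : 1 < u) :
    LSeriesSummable (fun n => χ n) u :=
  χ.LSeriesSummable_of_one_lt_re (by simpa using hu)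

lemma LSeries_term_char_ofReal (hu : u ≠ 0) (n : ℕ) :
    LSeries.term (fun n => χ n) u n = χ n * (((n : ℝ) ^ (-u) : ℝ) : ℂ) := by
  rcases eq_or_ne n 0 with rfl | hn
  · simp [Real.zero_rpow (neg_ne_zero.mpr hu)]
  · rw [LSeries.term_of_ne_zero hn, div_eq_mul_inv, ← Complex.cpow_neg, Complex.ofReal_cpow
      n.cast_nonneg, Complex.ofReal_neg, Complex.ofReal_natCast]

lemma norm_term_char_le (χ : DirichletCharacter ℂ N) (hu : 0 < u) (n : ℕ) :
    ‖LSeries.term (fun n => χ n) u n‖ ≤ (n : ℝ) ^ (-u) := by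
  rw [LSeries_term_char_ofReal hu.ne', norm_mul, Complex.norm_real,
    Real.norm_of_nonneg (by positivity)]
  exact mul_le_of_le_one_left (by positivity) (χ.norm_le_one _)

variable [NeZero N]

lemma sum_range_level_eq_zero (hχ : χ ≠ 1) : ∑ k ∈ range N, χ (k : ZMod N) = 0 := by
  rw [← MulChar.sum_eq_zero_of_ne_one hχ]
  refine sum_bij' (fun k _ => (k : ZMod N)) (fun a _ => a.val) (fun _ _ => mem_univ _)
    (fun a _ => by simpa using a.val_lt) (fun k hk => ZMod.val_cast_of_lt (by simpa using hk))
    (fun a _ => by simp) (fun _ _ => rfl)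

lemma sum_range_mod_level (hχ : χ ≠ 1) (n : ℕ) :
    ∑ k ∈ range (n % N), χ (k : ZMod N) = ∑ k ∈ range n, χ (k : ZMod N) := by
  have hmul (q : ℕ) : ∑ k ∈ range (N * q), χ (k : ZMod N) = 0 := by
    induction q with
    | zero => simp
    | succ q ih =>
      rw [mul_add_one, sum_range_add, ih, zero_add]
      simpa using sum_range_level_eq_zero hχ
  conv_rhs => rw [← Nat.div_add_mod n N, sum_range_add, hmul, zero_add]
  simp

lemma norm_sum_range_char_le (hχ : χ ≠ 1) (n : ℕ) : ‖∑ k ∈ range n, χ (k : ZMod N)‖ ≤ N := by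
  rw [← sum_range_mod_level hχ]
  calc _ ≤ ∑ _k ∈ range (n % N), (1 : ℝ) := norm_sum_le_of_le _ fun k _ => χ.norm_le_one _
    _ = ((n % N : ℕ) : ℝ) := by simp
    _ ≤ N := by exact_mod_cast (Nat.mod_lt n (NeZero.pos N)).le

lemma norm_sum_range_char_succ_le (hχ : χ ≠ 1) (n : ℕ) :
    ‖∑ k ∈ range n, χ ((k + 1 : ℕ) : ZMod N)‖ ≤ N := by
  have h := norm_sum_range_char_le hχ (n + 1)
  rwa [sum_range_succ', Nat.cast_zero, χ.map_zero' (level_ne_one_of_ne_one hχ), add_zero] at h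

lemma norm_sum_Icc_char_le (hχ : χ ≠ 1) (n : ℕ) : ‖∑ k ∈ Icc 1 n, χ (k : ZMod N)‖ ≤ N := by
  rw [← Ico_add_one_right_eq_Icc, sum_Ico_eq_sum_range]
  simpa [add_comm] using norm_sum_range_char_succ_le hχ n

lemma LFunction_eq_LSeries_ofReal (χ : DirichletCharacter ℂ N) (hu : 1 < u) :
    χ.LFunction u = LSeries (fun n => χ n) u :=
  χ.LFunction_eq_LSeries (by simpa using hu)

lemma norm_LFunction_le_level (hχ : χ ≠ 1) (hu : 1 < u) : ‖χ.LFunction u‖ ≤ N := by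
  rw [LFunction_eq_LSeries_ofReal χ hu]
  exact norm_LSeries_le_of_sum_le (norm_sum_Icc_char_le hχ) (by linarith)
    (LSeriesSummable_char_ofReal χ hu)

lemma norm_LFunction_sub_le (hχ : χ ≠ 1) (hu : 1 ≤ u) (huv : u ≤ v) :
    ‖χ.LFunction u - χ.LFunction v‖ ≤ 2 * N * (v - u) := by
  have hcont : Continuous fun w : ℝ => χ.LFunction w :=
    (DirichletCharacter.differentiable_LFunction hχ).continuous.comp Complex.continuous_ofReal
  have hgt {w : ℝ} (hw : 1 < w) (hwv : w ≤ v) :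
      ‖χ.LFunction w - χ.LFunction v‖ ≤ 2 * N * (v - w) := by
    rw [LFunction_eq_LSeries_ofReal χ hw, LFunction_eq_LSeries_ofReal χ (hw.trans_le hwv)]
    refine (norm_LSeries_sub_le_of_sum_le (norm_sum_Icc_char_le hχ) (by linarith) hwv
      (LSeriesSummable_char_ofReal χ hw) (LSeriesSummable_char_ofReal χ (hw.trans_le hwv))).trans ?_
    exact div_le_self (mul_nonneg (by positivity) (sub_nonneg.mpr hwv)) (hw.trans_le hwv).le
  rcases huv.eq_or_lt with rfl | huv
  · simp
  -- only `u = 1` requires the limit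
  refine le_of_tendsto_of_tendsto (b := 𝓝[>] u)
    ((hcont.sub continuous_const).norm.tendsto' u _ rfl |>.mono_left nhdsWithin_le_nhds)
    ((by fun_prop : Continuous fun w : ℝ => 2 * N * (v - w)).tendsto' u _ rfl
      |>.mono_left nhdsWithin_le_nhds) ?_
  filter_upwards [Ioo_mem_nhdsGT huv] with w hw
  exact hgt (hu.trans_lt hw.1) hw.2.le

lemma norm_LFunction_le (χ : DirichletCharacter ℂ N) (hu : 1 < u) :
    ‖χ.LFunction u‖ ≤ u / (u - 1) := by
  rw [LFunction_eq_LSeries_ofReal χ hu]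
  exact (tsum_of_norm_bounded (Real.summable_nat_rpow.mpr (by linarith)).hasSum
    (norm_term_char_le χ (by linarith))).trans (tsum_rpow_neg_le hu)

end CharacterSums

/-! ### Non-quadratic characters and Abel summation -/

section LowerBounds

variable {N : ℕ} [NeZero N] {χ : DirichletCharacter ℂ N} {u x : ℝ}

lemma one_le_level : (1 : ℝ) ≤ N := by exact_mod_cast NeZero.one_le

lemma le_norm_LFunction_of_sq_ne_one (hχ : χ ^ 2 ≠ 1) (hx : x = 1 / (2048 * (N : ℝ) ^ 5)) :
    4 * N * x ≤ ‖χ.LFunction (1 + x : ℝ)‖ := by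
  have hN : (1 : ℝ) ≤ N := one_le_level
  have hx0 : 0 < x := by rw [hx]; positivity
  have hx1 : x ≤ 1 := by
    rw [hx, div_le_one (by positivity)]
    linarith [one_le_pow₀ hN (n := 5)]
  have h341 := χ.norm_LFunction_product_ge_one hx0 0
  simp only [DirichletCharacter.LFunctionTrivChar, Complex.ofReal_zero, mul_zero, add_zero,
    norm_mul, norm_pow, ← Complex.ofReal_one, ← Complex.ofReal_add] at h341
  have htriv : ‖(1 : DirichletCharacter ℂ N).LFunction (1 + x : ℝ)‖ ≤ 2 / x := by
    refine (norm_LFunction_le 1 (by linarith)).trans ?_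
    rw [add_sub_cancel_left]
    gcongr
    linarith
  by_contra! hlt
  have : (1 : ℝ) < 1 := calc
    1 ≤ _ := h341
    _ ≤ (2 / x) ^ 3 * ‖χ.LFunction (1 + x : ℝ)‖ ^ 4 * N := by
      gcongr
      exact norm_LFunction_le_level hχ (by linarith)
    _ < (2 / x) ^ 3 * (4 * N * x) ^ 4 * N := by gcongr
    _ = 1 := by
      rw [hx]
      field_simp
      norm_num
  exact this.false

lemma norm_sum_mul_le_of_antitone {f : ℕ → ℝ} {c : ℕ → ℂ} {B : ℝ} (hf : Antitone f)
    (hf0 : ∀ n, 0 ≤ f n) (hc : ∀ n, ‖∑ i ∈ range n, c i‖ ≤ B) (n : ℕ) :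
    ‖∑ i ∈ range n, (f i : ℂ) * c i‖ ≤ f 0 * B := by
  have hparts := sum_range_by_parts (fun i => (f i : ℂ)) c n
  simp only [smul_eq_mul] at hparts
  have hterm (i : ℕ) : ‖((f (i + 1) : ℂ) - f i) * ∑ j ∈ range (i + 1), c j‖ ≤
      (f i - f (i + 1)) * B := by
    rw [norm_mul, norm_sub_rev, ← Complex.ofReal_sub, Complex.norm_real,
      Real.norm_of_nonneg (sub_nonneg.mpr (hf i.le_succ))]
    exact mul_le_mul_of_nonneg_left (hc _) (sub_nonneg.mpr (hf i.le_succ))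
  calc _ ≤ f (n - 1) * B + ∑ i ∈ range (n - 1), (f i - f (i + 1)) * B := by
        rw [hparts]
        refine norm_sub_le_of_le ?_ (norm_sum_le_of_le _ fun i _ => hterm i)
        rw [norm_mul, Complex.norm_real, Real.norm_of_nonneg (hf0 _)]
        exact mul_le_mul_of_nonneg_left (hc n) (hf0 _)
    _ = f 0 * B := by rw [← sum_mul, sum_range_sub']; ring

/-- The difference between `1 / (d * (1 - x))` and the Lambert weight `x ^ d / (1 - x ^ d)`, two
functions of `d` which agree to first order as `x → 1`. -/
noncomputable def lambertGap (x : ℝ) (d : ℕ) : ℝ := 1 / (d * (1 - x)) - x ^ d / (1 - x ^ d)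

lemma lambertGap_one (hx : x < 1) : lambertGap x 1 = 1 := by
  have : 1 - x ≠ 0 := by linarith
  rw [lambertGap, Nat.cast_one, one_mul, pow_one, ← sub_div, div_self this]

lemma lambertGap_eq (x : ℝ) (d : ℕ) :
    lambertGap x d = (1 / d - x ^ d / ∑ i ∈ range d, x ^ i) / (1 - x) := by
  rw [lambertGap, ← mul_neg_geom_sum, sub_div, div_div, div_div, mul_comm (1 - x)]

lemma mul_pow_le_geom_sum_sq (t : ℝ) (d : ℕ) :
    d * t ^ (d - 1) ≤ ∑ i ∈ range d, (t ^ 2) ^ i := by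
  -- AM-GM on the pair of terms with indices `i` and `d - 1 - i`
  have hpair : ∀ i ∈ range d, 2 * t ^ (d - 1) ≤ (t ^ 2) ^ i + (t ^ 2) ^ (d - 1 - i) := by
    intro i hi
    have hsplit : t ^ (d - 1) = t ^ i * t ^ (d - 1 - i) := by
      have := mem_range.mp hi
      rw [← pow_add]
      congr 1
      lia
    rw [hsplit, pow_right_comm t 2 i, pow_right_comm t 2 (d - 1 - i)]
    linarith [two_mul_le_add_sq (t ^ i) (t ^ (d - 1 - i))]
  have := sum_le_sum hpair
  rw [sum_add_distrib, sum_range_reflect (fun i => (t ^ 2) ^ i), sum_const, card_range,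
    nsmul_eq_mul] at this
  linarith

lemma mul_pow_le_geom_sum_mul_geom_sum (hx0 : 0 ≤ x) (hx1 : x ≤ 1) (d : ℕ) :
    d * (d + 1) * x ^ d ≤ (∑ i ∈ range d, x ^ i) * ∑ i ∈ range (d + 1), x ^ i := by
  obtain ⟨t, ht, rfl⟩ : ∃ t : ℝ, 0 ≤ t ∧ t ^ 2 = x := ⟨√x, Real.sqrt_nonneg _, Real.sq_sqrt hx0⟩
  have ht1 : t ≤ 1 := by nlinarith
  calc _ ≤ d * (d + 1) * (t ^ (d - 1) * t ^ d) := by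
        rw [← pow_mul, ← pow_add]
        exact mul_le_mul_of_nonneg_left (pow_le_pow_of_le_one ht ht1 (by lia)) (by positivity)
    _ = (d * t ^ (d - 1)) * ((d + 1 : ℕ) * t ^ (d + 1 - 1)) := by
        rw [Nat.add_sub_cancel]
        push_cast
        ring
    _ ≤ _ := mul_le_mul (mul_pow_le_geom_sum_sq t d) (mul_pow_le_geom_sum_sq t (d + 1))
        (by positivity) (sum_nonneg fun i _ => by positivity)

lemma geom_sum_succ_pos (hx0 : 0 ≤ x) (d : ℕ) : 0 < ∑ i ∈ range (d + 1), x ^ i :=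
  geom_sum_pos hx0 d.succ_ne_zero

lemma antitone_lambertGap_succ (hx0 : 0 ≤ x) (hx1 : x < 1) :
    Antitone fun i => lambertGap x (i + 1) := by
  refine antitone_nat_of_succ_le fun n => ?_
  simp only [lambertGap_eq]
  refine div_le_div_of_nonneg_right ?_ (by linarith)
  set d := n + 1 with hd
  have hd0 : (0 : ℝ) < d := by positivity
  have hG := geom_sum_succ_pos hx0 n
  have hG' := geom_sum_succ_pos hx0 d
  rw [← hd] at hG
  have hgeom : x ^ d / ∑ i ∈ range d, x ^ i - x ^ (d + 1) / ∑ i ∈ range (d + 1), x ^ i =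
      x ^ d / ((∑ i ∈ range d, x ^ i) * ∑ i ∈ range (d + 1), x ^ i) := by
    rw [div_sub_div _ _ hG.ne' hG'.ne', geom_sum_succ]
    ring
  have hharm : (1 : ℝ) / d - 1 / (d + 1 : ℕ) = 1 / (d * (d + 1)) := by
    push_cast
    field_simp
    ring
  have : x ^ d / ((∑ i ∈ range d, x ^ i) * ∑ i ∈ range (d + 1), x ^ i) ≤ 1 / (d * (d + 1)) := by
    rw [div_le_div_iff₀ (by positivity) (by positivity), mul_comm, one_mul]
    exact mul_pow_le_geom_sum_mul_geom_sum hx0 hx1.le d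
  linarith

lemma lambertGap_succ_nonneg (hx0 : 0 ≤ x) (hx1 : x < 1) (i : ℕ) : 0 ≤ lambertGap x (i + 1) := by
  rw [lambertGap_eq]
  refine div_nonneg (sub_nonneg.mpr ?_) (by linarith)
  rw [div_le_div_iff₀ (geom_sum_succ_pos hx0 i) (by positivity), mul_comm, one_mul]
  calc ((i + 1 : ℕ) : ℝ) * x ^ (i + 1) = ∑ _j ∈ range (i + 1), x ^ (i + 1) := by simp
    _ ≤ ∑ j ∈ range (i + 1), x ^ j := sum_le_sum fun j hj =>
        pow_le_pow_of_le_one hx0 hx1.le (mem_range.mp hj).le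

lemma norm_sum_char_mul_lambertGap_le (hχ : χ ≠ 1) (hu : 1 ≤ u) (hx0 : 0 ≤ x) (hx1 : x < 1)
    (n : ℕ) :
    ‖∑ i ∈ range n, χ (i : ZMod N) * (((i : ℝ) ^ (1 - u) * lambertGap x i : ℝ) : ℂ)‖ ≤ N := by
  have hpow : Antitone fun i : ℕ => ((i + 1 : ℕ) : ℝ) ^ (1 - u) := fun a b hab =>
    Real.rpow_le_rpow_of_nonpos (by positivity) (by gcongr) (by linarith)
  have habel := norm_sum_mul_le_of_antitone
    (f := fun i => ((i + 1 : ℕ) : ℝ) ^ (1 - u) * lambertGap x (i + 1))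
    (fun a b hab => mul_le_mul (hpow hab) (antitone_lambertGap_succ hx0 hx1 hab)
      (lambertGap_succ_nonneg hx0 hx1 b) (by positivity))
    (fun i => mul_nonneg (by positivity) (lambertGap_succ_nonneg hx0 hx1 i))
    (norm_sum_range_char_succ_le hχ)
  rcases n with - | n
  · simp
  rw [sum_range_succ', Nat.cast_zero, χ.map_zero' (level_ne_one_of_ne_one hχ), zero_mul, add_zero]
  simpa [lambertGap_one hx1, mul_comm] using habel n

end LowerBounds

/-! ### Lambert series of a character -/

section LambertSeries

variable {N : ℕ} {χ : DirichletCharacter ℂ N} {u x : ℝ}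

lemma norm_char_mul_lambert_le (χ : DirichletCharacter ℂ N) (hu : 1 ≤ u) (hx0 : 0 ≤ x)
    (hx1 : x < 1) (n : ℕ) :
    ‖χ n * (((n : ℝ) ^ (1 - u) * (x ^ n / (1 - x ^ n)) : ℝ) : ℂ)‖ ≤ x ^ n / (1 - x) := by
  rcases Nat.eq_zero_or_pos n with rfl | hn
  · simp [hx1.le]
  have hxn : x ^ n ≤ x := pow_le_of_le_one hx0 hx1.le hn.ne'
  have : 0 < 1 - x := by linarith
  have hxn' : 0 < 1 - x ^ n := by linarith
  have hpow : (n : ℝ) ^ (1 - u) ≤ 1 :=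
    Real.rpow_le_one_of_one_le_of_nonpos (by exact_mod_cast hn) (by linarith)
  rw [norm_mul, Complex.norm_real, Real.norm_of_nonneg (by positivity)]
  calc _ ≤ 1 * (1 * (x ^ n / (1 - x))) := by
        gcongr
        exact χ.norm_le_one _
    _ = _ := by ring

lemma summable_pow_div_one_sub (hx0 : 0 ≤ x) (hx1 : x < 1) :
    Summable fun n : ℕ => x ^ n / (1 - x) :=
  (summable_geometric_of_lt_one hx0 hx1).div_const _

lemma zetaMul_eq_sum_divisors (χ : DirichletCharacter ℂ N) (n : ℕ) :
    χ.zetaMul n = ∑ d ∈ n.divisors, χ d := by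
  rw [DirichletCharacter.zetaMul, ArithmeticFunction.coe_zeta_mul_apply]
  exact sum_congr rfl fun d hd => if_neg (Nat.pos_of_mem_divisors hd).ne'

lemma tsum_pnat_pow_mul (hx0 : 0 ≤ x) (hx1 : x < 1) (d : ℕ+) :
    ∑' m : ℕ+, (x : ℂ) ^ (d * m : ℕ) = ((x ^ (d : ℕ) / (1 - x ^ (d : ℕ)) : ℝ) : ℂ) := by
  have hxd : ‖(x : ℂ) ^ (d : ℕ)‖ < 1 := by
    rw [norm_pow, Complex.norm_real, Real.norm_of_nonneg hx0]
    exact pow_lt_one₀ hx0 hx1 d.ne_zero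
  simp only [pow_mul]
  rw [tsum_pnat_eq_tsum_succ (f := fun m => ((x : ℂ) ^ (d : ℕ)) ^ m)]
  simp only [_root_.pow_succ', tsum_mul_left, tsum_geometric_of_norm_lt_one hxd]
  push_cast
  rw [div_eq_mul_inv]

lemma hasSum_zetaMul_mul_pow (χ : DirichletCharacter ℂ N) (hx0 : 0 ≤ x) (hx1 : x < 1) :
    HasSum (fun n : ℕ+ => χ.zetaMul n * (x : ℂ) ^ (n : ℕ))
      (∑' d : ℕ+, χ (d : ℕ) * ((x ^ (d : ℕ) / (1 - x ^ (d : ℕ)) : ℝ) : ℂ)) := by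
  have hx : ‖(x : ℂ)‖ < 1 := by rwa [Complex.norm_real, Real.norm_of_nonneg hx0]
  have hsum : Summable fun p : ℕ+ × ℕ+ => χ (p.1 : ℕ) * (x : ℂ) ^ (p.1 * p.2 : ℕ) := by
    refine .of_norm_bounded (summable_prod_mul_pow 0 hx).norm fun p => ?_
    rw [pow_zero, one_mul, norm_mul]
    exact mul_le_of_le_one_left (norm_nonneg _) (χ.norm_le_one _)
  have htsum : ∑' p : ℕ+ × ℕ+, χ (p.1 : ℕ) * (x : ℂ) ^ (p.1 * p.2 : ℕ) =
      ∑' d : ℕ+, χ (d : ℕ) * ((x ^ (d : ℕ) / (1 - x ^ (d : ℕ)) : ℝ) : ℂ) := by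
    rw [hsum.tsum_prod]
    exact tsum_congr fun d => by simp only [tsum_mul_left, tsum_pnat_pow_mul hx0 hx1]
  rw [← htsum]
  refine (sigmaAntidiagonalEquivProd.hasSum_iff.mpr hsum.hasSum).sigma fun n => ?_
  convert! hasSum_fintype _
  rw [zetaMul_eq_sum_divisors, sum_mul, univ_eq_attach, ← Nat.sum_divisorsAntidiagonal
    (f := fun d _ => χ (d : ZMod N) * (x : ℂ) ^ (n : ℕ)), ← sum_attach]
  refine sum_congr rfl fun p _ => ?_
  simp [sigmaAntidiagonalEquivProd, divisorsAntidiagonalFactors,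
    (Nat.mem_divisorsAntidiagonal.mp p.2).1]

variable [NeZero N]

lemma hasSum_char_mul_rpow_neg (χ : DirichletCharacter ℂ N) (hu : 1 < u) :
    HasSum (fun n : ℕ => χ n * (((n : ℝ) ^ (-u) : ℝ) : ℂ)) (χ.LFunction u) := by
  rw [LFunction_eq_LSeries_ofReal χ hu]
  rw [← funext (LSeries_term_char_ofReal (by linarith))]
  exact (LSeriesSummable_char_ofReal χ hu).LSeriesHasSum

lemma norm_LFunction_sub_tsum_rpow_mul_lambert_le (hχ : χ ≠ 1) (hu : 1 < u) (hx0 : 0 ≤ x)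
    (hx1 : x < 1) :
    ‖χ.LFunction u / ((1 - x : ℝ) : ℂ) -
      ∑' n : ℕ, χ n * (((n : ℝ) ^ (1 - u) * (x ^ n / (1 - x ^ n)) : ℝ) : ℂ)‖ ≤ N := by
  have hlambert : Summable fun n : ℕ =>
      χ n * (((n : ℝ) ^ (1 - u) * (x ^ n / (1 - x ^ n)) : ℝ) : ℂ) :=
    .of_norm_bounded (summable_pow_div_one_sub hx0 hx1) (norm_char_mul_lambert_le χ hu.le hx0 hx1)
  have hsum := ((hasSum_char_mul_rpow_neg χ hu).div_const ((1 - x : ℝ) : ℂ)).sub hlambert.hasSum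
  refine le_of_tendsto hsum.tendsto_sum_nat.norm (.of_forall fun n => ?_)
  convert! norm_sum_char_mul_lambertGap_le hχ hu.le hx0 hx1 n using 3 with i
  rcases eq_or_ne i 0 with rfl | hi
  · simp [χ.map_zero' (level_ne_one_of_ne_one hχ)]
  have hrpow : (i : ℝ) ^ (-u) / (1 - x) = (i : ℝ) ^ (1 - u) * (1 / (i * (1 - x))) := by
    rw [sub_eq_add_neg 1 u, Real.rpow_add (by positivity), Real.rpow_one]
    field_simp
  rw [lambertGap, mul_sub, ← hrpow]
  push_cast
  ring

lemma norm_LFunction_one_sub_tsum_lambert_le (hχ : χ ≠ 1) (hx0 : 0 ≤ x) (hx1 : x < 1) :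
    ‖χ.LFunction 1 / ((1 - x : ℝ) : ℂ) - ∑' n : ℕ, χ n * ((x ^ n / (1 - x ^ n) : ℝ) : ℂ)‖ ≤ N := by
  have hL : Tendsto (fun u : ℝ => χ.LFunction u) (𝓝[>] 1) (𝓝 (χ.LFunction 1)) := by
    have hcont := (DirichletCharacter.differentiable_LFunction hχ).continuous
    exact ((hcont.comp Complex.continuous_ofReal).tendsto' 1 _ (by simp)).mono_left
      nhdsWithin_le_nhds
  have hterm (n : ℕ) : Tendsto (fun u : ℝ =>
      χ n * (((n : ℝ) ^ (1 - u) * (x ^ n / (1 - x ^ n)) : ℝ) : ℂ)) (𝓝[>] 1)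
      (𝓝 (χ n * ((x ^ n / (1 - x ^ n) : ℝ) : ℂ))) := by
    rcases eq_or_ne n 0 with rfl | hn
    · simp
    have hpow : Continuous fun u : ℝ => (n : ℝ) ^ (1 - u) :=
      Real.continuous_const_rpow (by positivity) |>.comp (by fun_prop)
    refine (Continuous.tendsto' ?_ 1 _ (by simp)).mono_left nhdsWithin_le_nhds
    fun_prop
  have hlambert := tendsto_tsum_of_dominated_convergence (summable_pow_div_one_sub hx0 hx1) hterm
    (eventually_mem_nhdsWithin.mono fun u hu => norm_char_mul_lambert_le χ (le_of_lt hu) hx0 hx1)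
  refine le_of_tendsto ((hL.div_const _).sub hlambert).norm ?_
  filter_upwards [self_mem_nhdsWithin] with u hu
  exact norm_LFunction_sub_tsum_rpow_mul_lambert_le hχ hu hx0 hx1

end LambertSeries

/-! ### Quadratic characters -/

section QuadraticCharacters

variable {N : ℕ} {χ : DirichletCharacter ℂ N}

open scoped ComplexOrder

lemma one_le_zetaMul_sq (hχ : χ ^ 2 = 1) {m : ℕ} (hm : m ≠ 0) : 1 ≤ χ.zetaMul (m ^ 2) := by
  rw [χ.isMultiplicative_zetaMul.multiplicative_factorization _ (pow_ne_zero 2 hm)]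
  refine Finset.one_le_prod fun p hp => ?_
  have hp' : p.Prime := Nat.prime_of_mem_primeFactors hp
  simp only [Nat.factorization_pow, zetaMul_eq_sum_divisors, Nat.sum_divisors_prime_pow hp',
    Nat.cast_pow, map_pow, Finsupp.smul_apply, smul_eq_mul]
  rcases MulChar.isQuadratic_iff_sq_eq_one.mpr hχ p with h | h | h
  · simp [h, sum_range_succ']
  · simpa [h] using mul_nonneg zero_le_two (Nat.cast_nonneg (m.factorization p))
  · simp [h, neg_one_geom_sum]

lemma tsum_pnat_char_mul_lambert (χ : DirichletCharacter ℂ N) (x : ℝ) :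
    ∑' d : ℕ+, χ (d : ℕ) * ((x ^ (d : ℕ) / (1 - x ^ (d : ℕ)) : ℝ) : ℂ) =
      ∑' d : ℕ, χ d * ((x ^ d / (1 - x ^ d) : ℝ) : ℂ) := by
  refine PNat.coe_injective.tsum_eq (f := fun d : ℕ => χ d * ((x ^ d / (1 - x ^ d) : ℝ) : ℂ))
    fun d hd => ⟨⟨d, Nat.pos_of_ne_zero ?_⟩, rfl⟩
  rintro rfl
  simp at hd

lemma sum_pow_sq_le_re_tsum_lambert (hχ : χ ^ 2 = 1) {x : ℝ} (hx0 : 0 ≤ x) (hx1 : x < 1) (M : ℕ) :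
    ∑ m ∈ range M, x ^ (m + 1) ^ 2 ≤ (∑' d : ℕ, χ d * ((x ^ d / (1 - x ^ d) : ℝ) : ℂ)).re := by
  have hsum := Complex.hasSum_re (hasSum_zetaMul_mul_pow χ hx0 hx1)
  rw [tsum_pnat_char_mul_lambert] at hsum
  have hre (n : ℕ) : (χ.zetaMul n * (x : ℂ) ^ n).re = (χ.zetaMul n).re * x ^ n := by
    rw [← Complex.ofReal_pow, Complex.re_mul_ofReal]
  simp only [hre] at hsum
  have hsq : Function.Injective fun m : ℕ => (m.succPNat ^ 2 : ℕ+) := fun a b hab =>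
    Nat.succPNat_injective (PNat.eq (Nat.pow_left_injective two_ne_zero (congrArg PNat.val hab)))
  refine le_trans ?_ (sum_le_hasSum ((range M).map ⟨_, hsq⟩) (fun n _ =>
    mul_nonneg (Complex.le_def.mp (χ.zetaMul_nonneg hχ n)).1 (by positivity)) hsum)
  rw [sum_map]
  refine sum_le_sum fun m _ => ?_
  have := (Complex.le_def.mp (one_le_zetaMul_sq hχ m.succ_ne_zero)).1
  simpa using le_mul_of_one_le_left (pow_nonneg hx0 _) this

variable [NeZero N]

lemma le_norm_LFunction_one_of_sq_eq_one (hχ : χ ≠ 1) (hsq : χ ^ 2 = 1) :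
    1 / (32 * N) ≤ ‖χ.LFunction 1‖ := by
  have hN : (1 : ℝ) ≤ N := one_le_level
  set x : ℝ := 1 - 1 / (32 * N ^ 2) with hx
  have hx1 : x < 1 := sub_lt_self _ (by positivity)
  have hx0 : 0 ≤ x := by
    rw [hx, sub_nonneg, div_le_one (by positivity)]
    nlinarith
  have hpow : ∀ m ∈ range (4 * N), 1 / 2 ≤ x ^ (m + 1) ^ 2 := by
    intro m hm
    have hm' : (m + 1 : ℝ) ≤ 4 * N := by exact_mod_cast mem_range.mp hm
    have hbern := one_add_mul_le_pow (a := x - 1) (by linarith) ((m + 1) ^ 2)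
    rw [add_sub_cancel] at hbern
    refine le_trans ?_ hbern
    have hsq : (m + 1 : ℝ) ^ 2 / (32 * N ^ 2) ≤ (4 * N) ^ 2 / (32 * N ^ 2) := by gcongr
    have hhalf : (4 * N : ℝ) ^ 2 / (32 * N ^ 2) = 1 / 2 := by field_simp; norm_num
    push_cast
    rw [hx, sub_sub_cancel_left, mul_neg, mul_one_div]
    linarith
  have hsum := sum_pow_sq_le_re_tsum_lambert hsq hx0 hx1 (4 * N)
  have hnear := (Complex.abs_re_le_norm _).trans (norm_LFunction_one_sub_tsum_lambert_le hχ hx0 hx1)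
  have hcard : (4 * N : ℕ) * (1 / 2 : ℝ) ≤ ∑ m ∈ range (4 * N), x ^ (m + 1) ^ 2 := by
    simpa using card_nsmul_le_sum _ _ _ hpow
  push_cast at hcard
  rw [Complex.sub_re, Complex.div_ofReal_re, abs_le] at hnear
  have hL : N ≤ (χ.LFunction 1).re / (1 - x) := by linarith
  rw [le_div_iff₀ (by linarith), hx, sub_sub_cancel] at hL
  refine le_trans (le_of_eq ?_) (hL.trans (Complex.re_le_norm _))
  field_simp

lemma le_norm_LFunction (hχ : χ ≠ 1) {u : ℝ} (hu : 1 ≤ u) (hu' : u ≤ 1 + 1 / (2048 * N ^ 5)) :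
    1 / (1024 * N ^ 4) ≤ ‖χ.LFunction u‖ := by
  have hN : (1 : ℝ) ≤ N := one_le_level
  have hδ : 2 * N * (1 / (2048 * (N : ℝ) ^ 5)) = 1 / (1024 * N ^ 4) := by
    field_simp
    norm_num
  rcases eq_or_ne (χ ^ 2) 1 with hsq | hsq
  · have hlip : ‖χ.LFunction 1 - χ.LFunction u‖ ≤ 2 * N * (u - 1) := by
      simpa using norm_LFunction_sub_le hχ le_rfl hu
    have hstep : 2 * N * (u - 1) ≤ 1 / (1024 * N ^ 4) := by
      rw [← hδ]
      gcongr
      linarith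
    have hconst : 2 * (1 / (1024 * (N : ℝ) ^ 4)) ≤ 1 / (32 * N) := by
      rw [mul_one_div, div_le_div_iff₀ (by positivity) (by positivity)]
      nlinarith [one_le_pow₀ hN (n := 3)]
    linarith [le_norm_LFunction_one_of_sq_eq_one hχ hsq,
      norm_sub_norm_le (χ.LFunction 1) (χ.LFunction u)]
  · have hlip := norm_LFunction_sub_le hχ hu hu'
    have hstep : 2 * N * (1 + 1 / (2048 * (N : ℝ) ^ 5) - u) ≤ 1 / (1024 * N ^ 4) := by
      rw [← hδ]
      gcongr
      linarith
    rw [norm_sub_rev] at hlip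
    have hL := le_norm_LFunction_of_sq_ne_one hsq rfl
    linarith [norm_sub_norm_le (χ.LFunction (1 + 1 / (2048 * (N : ℝ) ^ 5) : ℝ)) (χ.LFunction u)]

lemma abs_log_norm_LFunction_le (hχ : χ ≠ 1) {u : ℝ} (hu : 1 < u)
    (hu' : u ≤ 1 + 1 / (2048 * N ^ 5)) : |Real.log ‖χ.LFunction u‖| ≤ 11 * N := by
  have hN : (1 : ℝ) ≤ N := one_le_level
  have hlower := le_norm_LFunction hχ hu.le hu'
  have hpos : 0 < ‖χ.LFunction u‖ := lt_of_lt_of_le (by positivity) hlower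
  have hlogN : Real.log N ≤ N - 1 := Real.log_le_sub_one_of_pos (by linarith)
  have hlog : Real.log (1 / (1024 * (N : ℝ) ^ 4)) = -(10 * Real.log 2 + 4 * Real.log N) := by
    rw [one_div, Real.log_inv, Real.log_mul (by norm_num) (by positivity), Real.log_pow,
      show (1024 : ℝ) = 2 ^ 10 by norm_num, Real.log_pow]
    norm_num
  rw [abs_le]
  constructor
  · linarith [Real.log_le_log (by positivity) hlower, Real.log_two_lt_d9]
  · linarith [Real.log_le_log hpos (norm_LFunction_le_level hχ hu)]

end QuadraticCharacters

/-! ### Primes in residue classes -/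

section PrimesInResidueClasses

variable {N : ℕ} {χ : DirichletCharacter ℂ N} {u η : ℝ}

/-- The sum `∑ Re χ(q) q ^ (-u)` over the primes `q`, which approximates `log |L(u, χ)|`. -/
noncomputable def primeCharSum (χ : DirichletCharacter ℂ N) (u : ℝ) : ℝ :=
  ∑' q : Nat.Primes, (χ (q : ℕ)).re * (q : ℝ) ^ (-u)

/-- The sum `∑ q ^ (-u)` over the primes `q ≡ a mod N`. -/
noncomputable def primeClassSum (a : ZMod N) (u : ℝ) : ℝ :=
  ∑' q : Nat.Primes, if ((q : ℕ) : ZMod N) = a then (q : ℝ) ^ (-u) else 0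

/-- The primes `q ≤ n` with `q ≡ a mod N`. -/
noncomputable def primesInClass (a : ZMod N) (n : ℕ) : Finset ℕ :=
  {q ∈ Icc 1 n | q.Prime ∧ (q : ZMod N) = a}

lemma summable_primes_rpow_neg (hu : 1 < u) : Summable fun q : Nat.Primes => (q : ℝ) ^ (-u) :=
  Nat.Primes.summable_rpow.mpr (by linarith)

lemma tsum_primes_le_tsum {f : Nat.Primes → ℝ} {g : ℕ → ℝ} (hf : Summable f) (hg : Summable g)
    (hg0 : ∀ n, 0 ≤ g n) (hfg : ∀ q : Nat.Primes, f q ≤ g q) : ∑' q, f q ≤ ∑' n, g n :=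
  hf.tsum_le_tsum_of_inj _ Nat.Primes.coe_nat_injective (fun n _ => hg0 n) hfg hg

lemma summable_primeCharSum (χ : DirichletCharacter ℂ N) (hu : 1 < u) :
    Summable fun q : Nat.Primes => (χ (q : ℕ)).re * (q : ℝ) ^ (-u) := by
  refine .of_norm_bounded (summable_primes_rpow_neg hu) fun q => ?_
  rw [norm_mul, Real.norm_of_nonneg (by positivity : 0 ≤ (q : ℝ) ^ (-u))]
  exact mul_le_of_le_one_left (by positivity)
    ((Complex.abs_re_le_norm _).trans (χ.norm_le_one _))

lemma norm_log_one_sub_add_self_le {z : ℂ} (hz : ‖z‖ ≤ 1 / 2) :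
    ‖Complex.log (1 - z) + z‖ ≤ ‖z‖ ^ 2 := by
  have hlog := Complex.norm_log_one_add_sub_self_le (z := -z) (by rw [norm_neg]; linarith)
  rw [norm_neg, sub_neg_eq_add, ← sub_eq_add_neg] at hlog
  have hinv : (1 - ‖z‖)⁻¹ ≤ 2 := by
    rw [inv_le_comm₀ (by linarith) two_pos]
    linarith
  calc _ ≤ ‖z‖ ^ 2 * (1 - ‖z‖)⁻¹ / 2 := hlog
    _ ≤ ‖z‖ ^ 2 * 2 / 2 := by gcongr
    _ = ‖z‖ ^ 2 := by ring

lemma norm_char_mul_prime_cpow_le (χ : DirichletCharacter ℂ N) (hu : 1 ≤ u) (q : Nat.Primes) :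
    ‖χ (q : ℕ) * (q : ℂ) ^ (-(u : ℂ))‖ ≤ (q : ℝ) ^ (-1 : ℝ) := by
  rw [norm_mul, Complex.norm_natCast_cpow_of_pos q.2.pos]
  calc _ ≤ 1 * (q : ℝ) ^ (-u) := by
        rw [Complex.neg_re, Complex.ofReal_re]
        gcongr
        exact χ.norm_le_one _
    _ ≤ _ := by
        rw [one_mul]
        exact Real.rpow_le_rpow_of_exponent_le (by exact_mod_cast q.2.one_le) (by linarith)

lemma tsum_primes_rpow_neg_two_le : ∑' q : Nat.Primes, (q : ℝ) ^ (-2 : ℝ) ≤ 2 := by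
  refine (tsum_primes_le_tsum (summable_primes_rpow_neg one_lt_two)
    (Real.summable_nat_rpow.mpr (by norm_num)) (fun n => by positivity) fun q => le_rfl).trans ?_
  exact (tsum_rpow_neg_le one_lt_two).trans_eq (by norm_num)

section

variable [NeZero N]

lemma abs_log_norm_LFunction_sub_primeCharSum_le (χ : DirichletCharacter ℂ N) (hu : 1 < u) :
    |Real.log ‖χ.LFunction u‖ - primeCharSum χ u| ≤ 2 := by
  have hu' : 1 < (u : ℂ).re := by simpa using hu
  have hlog := χ.summable_neg_log_one_sub_mul_prime_cpow hu'
  rw [χ.LFunction_eq_LSeries hu', ← χ.LSeries_eulerProduct_exp_log hu', Complex.norm_exp,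
    Real.log_exp, Complex.re_tsum hlog, primeCharSum,
    ← (Complex.hasSum_re hlog.hasSum).summable.tsum_sub (summable_primeCharSum χ hu)]
  rw [← Real.norm_eq_abs]
  refine (tsum_of_norm_bounded (summable_primes_rpow_neg one_lt_two).hasSum fun q => ?_).trans
    tsum_primes_rpow_neg_two_le
  set z : ℂ := χ (q : ℕ) * (q : ℂ) ^ (-(u : ℂ)) with hz
  have hzre : (χ (q : ℕ)).re * (q : ℝ) ^ (-u) = z.re := by
    rw [hz, ← Complex.ofReal_neg, ← Complex.ofReal_natCast, ← Complex.ofReal_cpow (by positivity),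
      Complex.re_mul_ofReal]
  have hznorm : ‖z‖ ≤ (q : ℝ) ^ (-1 : ℝ) := norm_char_mul_prime_cpow_le χ hu.le q
  have hhalf : (q : ℝ) ^ (-1 : ℝ) ≤ 1 / 2 := by
    rw [Real.rpow_neg_one, one_div]
    exact inv_anti₀ two_pos (by exact_mod_cast q.2.two_le)
  rw [hzre, ← Complex.sub_re]
  calc _ ≤ ‖-Complex.log (1 - z) - z‖ := Complex.abs_re_le_norm _
    _ = ‖Complex.log (1 - z) + z‖ := by rw [← norm_neg]; congr 1; ring
    _ ≤ ‖z‖ ^ 2 := norm_log_one_sub_add_self_le (hznorm.trans hhalf)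
    _ ≤ ((q : ℝ) ^ (-1 : ℝ)) ^ 2 := by gcongr
    _ = (q : ℝ) ^ (-2 : ℝ) := by rw [← Real.rpow_mul_natCast (by positivity)]; norm_num

lemma abs_primeCharSum_le (hχ : χ ≠ 1) (hη : 0 < η) (hη' : η ≤ 1 / (2048 * N ^ 5)) :
    |primeCharSum χ (1 + η)| ≤ 11 * N + 2 := by
  have hlog := abs_log_norm_LFunction_le hχ (u := 1 + η) (by linarith) (by linarith)
  have hsub := abs_log_norm_LFunction_sub_primeCharSum_le χ (u := 1 + η) (by linarith)
  rw [abs_le] at *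
  constructor <;> linarith

end

lemma primeCharSum_level_one : primeCharSum (1 : DirichletCharacter ℂ 1) u =
    ∑' q : Nat.Primes, (q : ℝ) ^ (-u) := by
  simp [primeCharSum, MulChar.one_apply (isUnit_of_subsingleton _)]

lemma LFunction_level_one (hu : 1 < u) :
    (1 : DirichletCharacter ℂ 1).LFunction u = ((∑' n : ℕ, (n : ℝ) ^ (-u) : ℝ) : ℂ) := by
  rw [← (hasSum_char_mul_rpow_neg 1 hu).tsum_eq, Complex.ofReal_tsum]
  simp [MulChar.one_apply (isUnit_of_subsingleton _)]

lemma le_tsum_primes_rpow_neg (hη : 0 < η) :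
    Real.log (1 / η) - 2 ≤ ∑' q : Nat.Primes, (q : ℝ) ^ (-(1 + η)) := by
  have hη1 : 1 < 1 + η := by linarith
  have hzeta := le_tsum_rpow_neg hη1
  rw [add_sub_cancel_left] at hzeta
  have hlog := Real.log_le_log (by positivity) hzeta
  have hsub := abs_log_norm_LFunction_sub_primeCharSum_le (1 : DirichletCharacter ℂ 1) hη1
  rw [LFunction_level_one hη1, Complex.norm_real,
    Real.norm_of_nonneg (tsum_nonneg fun n => by positivity), primeCharSum_level_one] at hsub
  linarith [(abs_le.mp hsub).2]

lemma apply_eq_one_or_neg_one_of_mul_self_eq_one (χ : DirichletCharacter ℂ N) {a : ZMod N}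
    (ha : a * a = 1) : χ a = 1 ∨ χ a = -1 :=
  mul_self_eq_one_iff.mp (by rw [← map_mul, ha, map_one])

variable [NeZero N]

lemma tsum_primes_sub_primeCharSum_one_le (N : ℕ) [NeZero N] (hu : 1 < u) :
    ∑' q : Nat.Primes, (q : ℝ) ^ (-u) - primeCharSum (1 : DirichletCharacter ℂ N) u ≤ N := by
  have hsum := summable_primes_rpow_neg hu
  have hsumχ := summable_primeCharSum (1 : DirichletCharacter ℂ N) hu
  have hfin : HasSum (fun n : ℕ => if n ∈ Icc 1 N then (1 : ℝ) else 0) N := by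
    have h : HasSum (fun n : ℕ => if n ∈ Icc 1 N then (1 : ℝ) else 0) _ :=
      hasSum_sum_of_ne_finset_zero (s := Icc 1 N) fun n hn => if_neg hn
    rwa [sum_ite_mem, inter_self, sum_const, Nat.card_Icc, Nat.add_sub_cancel, nsmul_one] at h
  rw [primeCharSum, ← hsum.tsum_sub hsumχ, ← hfin.tsum_eq]
  refine tsum_primes_le_tsum (hsum.sub hsumχ) hfin.summable
    (fun n => by split_ifs <;> simp) fun q => ?_
  by_cases hq : IsUnit ((q : ℕ) : ZMod N)
  · rw [MulChar.one_apply hq]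
    split_ifs <;> simp
  · have hqN : (q : ℕ) ∣ N := by
      by_contra hqN
      exact hq ((ZMod.isUnit_iff_coprime _ _).mpr ((q.2.coprime_iff_not_dvd).mpr hqN))
    rw [MulChar.map_nonunit _ hq, if_pos
      (mem_Icc.mpr ⟨q.2.one_le, Nat.le_of_dvd (NeZero.pos N) hqN⟩), Complex.zero_re, zero_mul,
      sub_zero]
    exact Real.rpow_le_one_of_one_le_of_nonpos (by exact_mod_cast q.2.one_le) (by linarith)

lemma le_primeCharSum_one (N : ℕ) [NeZero N] (hη : 0 < η) :
    Real.log (1 / η) - 2 - N ≤ primeCharSum (1 : DirichletCharacter ℂ N) (1 + η) := by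
  linarith [le_tsum_primes_rpow_neg hη,
    tsum_primes_sub_primeCharSum_one_le N (u := 1 + η) (by linarith)]

lemma totient_mul_primeClassSum {a : ZMod N} (ha : a * a = 1) (hu : 1 < u) :
    N.totient * primeClassSum a u =
      ∑ χ : DirichletCharacter ℂ N, (χ a).re * primeCharSum χ u := by
  simp only [primeClassSum, primeCharSum, ← tsum_mul_left]
  rw [← Summable.tsum_finsetSum fun χ _ => (summable_primeCharSum χ hu).mul_left _]
  refine tsum_congr fun q => ?_
  have horth := congrArg Complex.re <| DirichletCharacter.sum_char_inv_mul_char_eq ℂ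
    (.of_mul_eq_one a ha) ((q : ℕ) : ZMod N)
  have hre (χ : DirichletCharacter ℂ N) :
      (χ a * χ (q : ℕ)).re = (χ a).re * (χ (q : ℕ)).re := by
    rcases apply_eq_one_or_neg_one_of_mul_self_eq_one χ ha with h | h <;> simp [h]
  simp only [ZMod.inv_eq_of_mul_eq_one N a a ha, Complex.re_sum, hre] at horth
  simp only [← mul_assoc, ← sum_mul, horth, eq_comm (a := a)]
  split_ifs <;> simp

lemma le_primeClassSum {a : ZMod N} (ha : a * a = 1) (hη : 0 < η)
    (hη' : η ≤ 1 / (2048 * N ^ 5)) :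
    Real.log (1 / η) / N - (11 * N + 2) ≤ primeClassSum a (1 + η) := by
  have hN : (1 : ℝ) ≤ N := one_le_level
  have htot : 0 < (N.totient : ℝ) := by exact_mod_cast Nat.totient_pos.mpr (NeZero.pos N)
  have htotN : (N.totient : ℝ) ≤ N := by exact_mod_cast N.totient_le
  have hlog : 0 ≤ Real.log (1 / η) := by
    refine Real.log_nonneg ((one_le_div hη).mpr (hη'.trans ?_))
    rw [div_le_one (by positivity)]
    linarith [one_le_pow₀ hN (n := 5)]
  have hcard : (#(univ.erase (1 : DirichletCharacter ℂ N)) : ℝ) = N.totient - 1 := by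
    rw [card_erase_of_mem (mem_univ _), card_univ, ← Nat.card_eq_fintype_card,
      DirichletCharacter.card_eq_totient_of_hasEnoughRootsOfUnity,
      Nat.cast_pred (Nat.totient_pos.mpr (NeZero.pos N))]
  have hnontriv : |∑ χ ∈ univ.erase (1 : DirichletCharacter ℂ N),
      (χ a).re * primeCharSum χ (1 + η)| ≤ (N.totient - 1) * (11 * N + 2) := by
    rw [← hcard, ← nsmul_eq_mul]
    refine (abs_sum_le_sum_abs _ _).trans (sum_le_card_nsmul _ _ _ fun χ hχ => ?_)
    have hχa : |(χ a).re| = 1 := by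
      rcases apply_eq_one_or_neg_one_of_mul_self_eq_one χ ha with h | h <;> simp [h]
    rw [abs_mul, hχa, one_mul]
    exact abs_primeCharSum_le (ne_of_mem_erase hχ) hη hη'
  have horth := totient_mul_primeClassSum ha (u := 1 + η) (by linarith)
  rw [← add_sum_erase _ _ (mem_univ 1), MulChar.one_apply (.of_mul_eq_one a ha), Complex.one_re,
    one_mul] at horth
  have hmain : Real.log (1 / η) - N.totient * (11 * N + 2) ≤
      N.totient * primeClassSum a (1 + η) := by
    linarith [le_primeCharSum_one N hη, (abs_le.mp hnontriv).1]
  calc _ ≤ Real.log (1 / η) / N.totient - (11 * N + 2) := by gcongr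
    _ = (Real.log (1 / η) - N.totient * (11 * N + 2)) / N.totient := by field_simp
    _ ≤ primeClassSum a (1 + η) := by rwa [div_le_iff₀ htot, mul_comm (primeClassSum _ _)]

end PrimesInResidueClasses

/-! ### A uniform lower bound of Mertens type -/

section MertensLowerBound

variable {N : ℕ} {u η Y z : ℝ}

lemma ite_rpow_neg_le_ite_add (a : ZMod N) (hη : 0 ≤ η) (hz : 0 < z) (q : Nat.Primes) :
    (if ((q : ℕ) : ZMod N) = a then (q : ℝ) ^ (-(1 + η)) else 0) ≤
      (if (q : ℕ) ∈ primesInClass a ⌊z⌋₊ then 1 / (q : ℝ) else 0) +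
        z ^ (-(η / 2)) * (q : ℝ) ^ (-(1 + η / 2)) := by
  have hq : (1 : ℝ) ≤ q := by exact_mod_cast q.2.one_le
  split_ifs with ha hqz hqz
  · refine le_add_of_le_of_nonneg ?_ (by positivity)
    rw [one_div, ← Real.rpow_neg_one]
    exact Real.rpow_le_rpow_of_exponent_le hq (by linarith)
  · have hzq : z < q := by
      by_contra! h
      exact hqz (mem_filter.mpr ⟨mem_Icc.mpr ⟨q.2.one_le, Nat.le_floor h⟩, q.2, ha⟩)
    rw [zero_add, show -(1 + η) = -(η / 2) + -(1 + η / 2) by ring, Real.rpow_add (by linarith)]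
    gcongr ?_ * _
    exact Real.rpow_le_rpow_of_nonpos hz hzq.le (by linarith)
  · positivity
  · positivity

lemma primeClassSum_le (a : ZMod N) (hη : 0 < η) (hz : 0 < z) :
    primeClassSum a (1 + η) ≤ ∑ q ∈ primesInClass a ⌊z⌋₊, 1 / (q : ℝ) +
      z ^ (-(η / 2)) * ((1 + η / 2) / (η / 2)) := by
  have hsum : Summable fun q : Nat.Primes =>
      if ((q : ℕ) : ZMod N) = a then (q : ℝ) ^ (-(1 + η)) else 0 :=
    .of_nonneg_of_le (fun q => by positivity) (fun q => by split_ifs <;> first | rfl | positivity)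
      (summable_primes_rpow_neg (by linarith : 1 < 1 + η))
  have hfin := hasSum_sum_of_ne_finset_zero (L := .unconditional ℕ) (s := primesInClass a ⌊z⌋₊)
    (f := fun n : ℕ => if n ∈ primesInClass a ⌊z⌋₊ then 1 / (n : ℝ) else 0) fun n hn => if_neg hn
  rw [sum_ite_mem, inter_self] at hfin
  have htail : Summable fun n : ℕ => z ^ (-(η / 2)) * (n : ℝ) ^ (-(1 + η / 2)) :=
    (Real.summable_nat_rpow.mpr (by linarith)).mul_left _
  calc primeClassSum a (1 + η)
      ≤ ∑' n : ℕ, ((if n ∈ primesInClass a ⌊z⌋₊ then 1 / (n : ℝ) else 0) +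
          z ^ (-(η / 2)) * (n : ℝ) ^ (-(1 + η / 2))) :=
        tsum_primes_le_tsum hsum (hfin.summable.add htail) (fun n => by positivity)
          (ite_rpow_neg_le_ite_add a hη.le hz)
    _ = ∑ q ∈ primesInClass a ⌊z⌋₊, 1 / (q : ℝ) +
          z ^ (-(η / 2)) * ∑' n : ℕ, (n : ℝ) ^ (-(1 + η / 2)) := by
        rw [hfin.summable.tsum_add htail, hfin.tsum_eq, tsum_mul_left]
    _ ≤ _ := by
        gcongr
        simpa using tsum_rpow_neg_le (by linarith : 1 < 1 + η / 2)

lemma exp_exp_rpow_mul_le_one (hY : 1 ≤ Y) (hη : η = 4 * Y * Real.exp (-Y)) :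
    Real.exp (Real.exp Y) ^ (-(η / 2)) * ((1 + η / 2) / (η / 2)) ≤ 1 := by
  have hexp : Real.exp Y * Real.exp (-Y) = 1 := by
    rw [← Real.exp_add, add_neg_cancel, Real.exp_zero]
  have hexp_two : 2 ≤ Real.exp Y := by linarith [Real.add_one_le_exp Y]
  have hη0 : 0 < η := by rw [hη]; positivity
  have hpow : Real.exp (Real.exp Y) ^ (-(η / 2)) = (Real.exp Y * Real.exp Y)⁻¹ := by
    rw [← Real.exp_mul, ← Real.exp_add, ← Real.exp_neg, hη]
    congr 1
    linear_combination (-2 * Y) * hexp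
  have hquot : (1 + η / 2) / (η / 2) ≤ Real.exp Y * Real.exp Y := by
    have hmul : Real.exp Y * η = 4 * Y := by rw [hη]; linear_combination (4 * Y) * hexp
    rw [div_le_iff₀ (by positivity)]
    nlinarith
  rw [hpow, inv_mul_le_iff₀ (by positivity), mul_one]
  exact hquot

lemma eventually_four_mul_mul_exp_neg_le : ∀ᶠ Y : ℝ in atTop, ∀ t : ℝ, 1 ≤ t → t ^ 2 ≤ Y →
    4 * Y * Real.exp (-Y) ≤ 1 / (2048 * t ^ 5) := by
  have hlim := (Real.tendsto_pow_mul_exp_neg_atTop_nhds_zero 4).eventually_lt_const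
    (by norm_num : (0 : ℝ) < 1 / 8192)
  filter_upwards [hlim, eventually_ge_atTop 0] with Y hY hY0 t ht htY
  have hpow : t ^ 5 ≤ Y ^ 3 := by
    calc t ^ 5 ≤ t ^ 6 := pow_le_pow_right₀ ht (by norm_num)
      _ = (t ^ 2) ^ 3 := by ring
      _ ≤ Y ^ 3 := by gcongr
  rw [le_div_iff₀ (by positivity)]
  calc 4 * Y * Real.exp (-Y) * (2048 * t ^ 5) ≤ 4 * Y * Real.exp (-Y) * (2048 * Y ^ 3) := by gcongr
    _ = 8192 * (Y ^ 4 * Real.exp (-Y)) := by ring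
    _ ≤ 1 := by linarith

lemma eventually_le_log_one_div :
    ∀ᶠ Y : ℝ in atTop, 3 / 4 * Y ≤ Real.log (1 / (4 * Y * Real.exp (-Y))) := by
  have hlog := (tendsto_id.const_mul_atTop four_pos).eventually
    (Real.isLittleO_log_id_atTop.bound (by norm_num : (0 : ℝ) < 1 / 16))
  filter_upwards [hlog, eventually_gt_atTop 0] with Y hY hY0
  simp only [id, Real.norm_eq_abs] at hY
  rw [abs_of_nonneg (by positivity : 0 ≤ 4 * Y)] at hY
  rw [one_div, Real.log_inv, Real.log_mul (by positivity) (by positivity), Real.log_exp]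
  linarith [le_abs_self (Real.log (4 * Y))]

lemma eventually_le_sum_primesInClass : ∀ᶠ Y : ℝ in atTop, ∀ (N : ℕ) [NeZero N] (a : ZMod N),
    a * a = 1 → 28 * (N : ℝ) ^ 2 ≤ Y →
      Y / (4 * N) ≤ ∑ q ∈ primesInClass a ⌊Real.exp (Real.exp Y)⌋₊, 1 / (q : ℝ) := by
  filter_upwards [eventually_four_mul_mul_exp_neg_le, eventually_le_log_one_div,
    eventually_ge_atTop 1] with Y hsmall hlog hY N _ a ha hNY
  have hN : (1 : ℝ) ≤ N := one_le_level
  set η := 4 * Y * Real.exp (-Y) with hη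
  have hη0 : 0 < η := by positivity
  have hlower := le_primeClassSum ha hη0 (hsmall N hN (by nlinarith))
  have hupper := primeClassSum_le a hη0 (Real.exp_pos (Real.exp Y))
  have htail := exp_exp_rpow_mul_le_one hY hη
  have hmain : 3 / 4 * Y / N ≤ Real.log (1 / η) / N := by gcongr
  have herror : 11 * N + 3 ≤ Y / (2 * N) := by
    rw [le_div_iff₀ (by positivity)]
    nlinarith
  have hsplit : 3 / 4 * Y / N = Y / (4 * N) + Y / (2 * N) := by
    field_simp
    norm_num
  linarith

end MertensLowerBound

/-! ### Turán's inequality -/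

section DivisorCounts

variable {P : Finset ℕ}

lemma card_multiples_le (X d : ℕ) : (#{n ∈ Icc 1 X | d ∣ n} : ℝ) ≤ X / d := by
  rw [show Icc 1 X = Ioc 0 X from rfl, Nat.Ioc_filter_dvd_card_eq_div]
  exact Nat.cast_div_le

lemma le_card_multiples (X d : ℕ) : (X : ℝ) / d - 1 ≤ #{n ∈ Icc 1 X | d ∣ n} := by
  rw [show Icc 1 X = Ioc 0 X from rfl, Nat.Ioc_filter_dvd_card_eq_div]
  have h := Nat.lt_floor_add_one ((X : ℝ) / d)
  rw [Nat.floor_div_eq_div] at h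
  linarith

lemma sum_card_filter_comm {α β : Type*} (A : Finset α) (B : Finset β) (r : α → β → Prop)
    [∀ a b, Decidable (r a b)] :
    ∑ a ∈ A, (#{b ∈ B | r a b} : ℝ) = ∑ b ∈ B, (#{a ∈ A | r a b} : ℝ) := by
  exact_mod_cast sum_card_bipartiteAbove_eq_sum_card_bipartiteBelow r

lemma le_sum_card_filter_dvd (P : Finset ℕ) (X : ℕ) :
    X * (∑ q ∈ P, 1 / (q : ℝ)) - #P ≤ ∑ n ∈ Icc 1 X, (#{q ∈ P | q ∣ n} : ℝ) := by
  calc X * (∑ q ∈ P, 1 / (q : ℝ)) - #P = ∑ q ∈ P, ((X : ℝ) / q - 1) := by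
        simp [mul_sum, sum_sub_distrib, div_eq_mul_inv]
    _ ≤ ∑ q ∈ P, (#{n ∈ Icc 1 X | q ∣ n} : ℝ) := sum_le_sum fun q _ => le_card_multiples X q
    _ = _ := sum_card_filter_comm _ _ _

lemma card_common_multiples_le {q r : ℕ} (X : ℕ) (hqr : q ≠ r → q.Coprime r) :
    (#{n ∈ Icc 1 X | q ∣ n ∧ r ∣ n} : ℝ) ≤
      X * (1 / q * (1 / r)) + if q = r then X * (1 / (q : ℝ)) else 0 := by
  split_ifs with h
  · subst h
    have hcount := card_multiples_le X q
    have hnonneg : 0 ≤ (X : ℝ) * (1 / q * (1 / q)) := by positivity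
    simp only [and_self, mul_one_div] at hnonneg ⊢
    linarith
  · have hdvd : ∀ n, q ∣ n ∧ r ∣ n ↔ q * r ∣ n := fun n =>
      ⟨fun hn => (hqr h).mul_dvd_of_dvd_of_dvd hn.1 hn.2, fun hn =>
        ⟨dvd_of_mul_right_dvd hn, dvd_of_mul_left_dvd hn⟩⟩
    simp only [hdvd, add_zero]
    refine (card_multiples_le X (q * r)).trans_eq ?_
    rw [Nat.cast_mul, one_div_mul_one_div, mul_one_div]

lemma sum_sq_card_filter_dvd_le (hP : (P : Set ℕ).Pairwise Nat.Coprime) (X : ℕ) :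
    ∑ n ∈ Icc 1 X, (#{q ∈ P | q ∣ n} : ℝ) ^ 2 ≤
      X * (∑ q ∈ P, 1 / (q : ℝ)) ^ 2 + X * ∑ q ∈ P, 1 / (q : ℝ) := by
  calc ∑ n ∈ Icc 1 X, (#{q ∈ P | q ∣ n} : ℝ) ^ 2
      = ∑ n ∈ Icc 1 X, (#{t ∈ P ×ˢ P | t.1 ∣ n ∧ t.2 ∣ n} : ℝ) := by
        refine sum_congr rfl fun n _ => ?_
        rw [filter_product (· ∣ n) (· ∣ n), card_product, Nat.cast_mul, sq]
    _ = ∑ t ∈ P ×ˢ P, (#{n ∈ Icc 1 X | t.1 ∣ n ∧ t.2 ∣ n} : ℝ) := sum_card_filter_comm _ _ _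
    _ ≤ ∑ t ∈ P ×ˢ P, ((X : ℝ) * (1 / t.1 * (1 / t.2)) +
          if t.1 = t.2 then X * (1 / (t.1 : ℝ)) else 0) := by
        refine sum_le_sum fun t ht => card_common_multiples_le X fun hne => ?_
        exact hP (mem_product.mp ht).1 (mem_product.mp ht).2 hne
    _ = X * (∑ q ∈ P, 1 / (q : ℝ)) ^ 2 + X * ∑ q ∈ P, 1 / (q : ℝ) := by
        rw [sum_add_distrib, ← mul_sum, sq, sum_mul_sum, sum_product, sum_product]
        refine congrArg₂ _ rfl ((sum_congr rfl fun q hq => ?_).trans (mul_sum P _ (X : ℝ)).symm)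
        rw [sum_ite_eq, if_pos hq]

lemma sum_card_filter_dvd_sub_sq_le (hP : (P : Set ℕ).Pairwise Nat.Coprime) (X : ℕ) :
    ∑ n ∈ Icc 1 X, ((#{q ∈ P | q ∣ n} : ℝ) - ∑ q ∈ P, 1 / (q : ℝ)) ^ 2 ≤
      (X + 2 * #P) * ∑ q ∈ P, 1 / (q : ℝ) := by
  have hfirst := le_sum_card_filter_dvd P X
  have hsecond := sum_sq_card_filter_dvd_le hP X
  set S := ∑ q ∈ P, 1 / (q : ℝ)
  have hS : 0 ≤ S := by positivity
  have hexpand : ∑ n ∈ Icc 1 X, ((#{q ∈ P | q ∣ n} : ℝ) - S) ^ 2 =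
      ∑ n ∈ Icc 1 X, (#{q ∈ P | q ∣ n} : ℝ) ^ 2 -
        2 * S * ∑ n ∈ Icc 1 X, (#{q ∈ P | q ∣ n} : ℝ) + X * S ^ 2 := by
    simp only [sub_sq', sum_sub_distrib, sum_add_distrib, sum_const, Nat.card_Icc,
      Nat.add_sub_cancel, nsmul_eq_mul, ← mul_sum, ← sum_mul]
    ring
  rw [hexpand]
  nlinarith

lemma card_filter_mul_le_sum {α : Type*} {A : Finset α} {p : α → Prop} [DecidablePred p]
    {f : α → ℝ} {c : ℝ} (hf : ∀ a ∈ A, 0 ≤ f a)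
    (hp : ∀ a ∈ A, p a → c ≤ f a) : #{a ∈ A | p a} * c ≤ ∑ a ∈ A, f a := by
  rw [← nsmul_eq_mul]
  refine (card_nsmul_le_sum _ f c fun a ha => ?_).trans
    (sum_le_sum_of_subset_of_nonneg (filter_subset _ _) fun a ha _ => hf a ha)
  exact hp a (mem_filter.mp ha).1 (mem_filter.mp ha).2

lemma card_filter_card_filter_dvd_le (hP : (P : Set ℕ).Pairwise Nat.Coprime) (X : ℕ)
    (hS : 0 < ∑ q ∈ P, 1 / (q : ℝ)) :
    (#{n ∈ Icc 1 X | (#{q ∈ P | q ∣ n} : ℝ) ≤ (∑ q ∈ P, 1 / (q : ℝ)) / 2} : ℝ) ≤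
      (4 * X + 8 * #P) / ∑ q ∈ P, 1 / (q : ℝ) := by
  have hvar := sum_card_filter_dvd_sub_sq_le hP X
  set S := ∑ q ∈ P, 1 / (q : ℝ)
  have hmarkov := card_filter_mul_le_sum (A := Icc 1 X)
    (p := fun n => (#{q ∈ P | q ∣ n} : ℝ) ≤ S / 2) (c := S ^ 2 / 4)
    (fun n _ => sq_nonneg ((#{q ∈ P | q ∣ n} : ℝ) - S)) fun n _ hn => by nlinarith
  rw [le_div_iff₀ hS]
  refine le_of_mul_le_mul_right ?_ (by positivity : 0 < S / 4)
  linarith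

lemma card_filter_le_card_filter_sq_dvd_le {σ c : ℝ} (hσ : 0 < σ)
    (hc : ∑ q ∈ P, 1 / (q : ℝ) ^ 2 ≤ c) (X : ℕ) :
    (#{n ∈ Icc 1 X | σ ≤ #{q ∈ P | q ^ 2 ∣ n}} : ℝ) ≤ c * X / σ := by
  rw [le_div_iff₀ hσ]
  calc #{n ∈ Icc 1 X | σ ≤ #{q ∈ P | q ^ 2 ∣ n}} * σ
      ≤ ∑ n ∈ Icc 1 X, (#{q ∈ P | q ^ 2 ∣ n} : ℝ) :=
        card_filter_mul_le_sum (fun _ _ => Nat.cast_nonneg _) fun _ _ h => h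
    _ = ∑ q ∈ P, (#{n ∈ Icc 1 X | q ^ 2 ∣ n} : ℝ) := sum_card_filter_comm _ _ _
    _ ≤ ∑ q ∈ P, 1 / (q : ℝ) ^ 2 * X := by
        refine sum_le_sum fun q _ => (card_multiples_le X (q ^ 2)).trans_eq ?_
        push_cast
        ring
    _ ≤ c * X := by
        rw [← sum_mul]
        gcongr

lemma card_filter_card_exactly_dvd_lt_le {k : ℕ} {c : ℝ}
    (hP : (P : Set ℕ).Pairwise Nat.Coprime) (hc : ∑ q ∈ P, 1 / (q : ℝ) ^ 2 ≤ c) (X : ℕ)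
    (hS : 0 < ∑ q ∈ P, 1 / (q : ℝ)) (hk : 4 * (k : ℝ) ≤ ∑ q ∈ P, 1 / (q : ℝ)) :
    (#{n ∈ Icc 1 X | #{q ∈ P | q ∣ n ∧ ¬ q ^ 2 ∣ n} < k} : ℝ) ≤
      ((4 + 4 * c) * X + 8 * #P) / ∑ q ∈ P, 1 / (q : ℝ) := by
  have hfew := card_filter_card_filter_dvd_le hP X hS
  have hsquares := card_filter_le_card_filter_sq_dvd_le (div_pos hS four_pos) hc X
  set S := ∑ q ∈ P, 1 / (q : ℝ)
  have hsub : {n ∈ Icc 1 X | #{q ∈ P | q ∣ n ∧ ¬ q ^ 2 ∣ n} < k} ⊆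
      {n ∈ Icc 1 X | (#{q ∈ P | q ∣ n} : ℝ) ≤ S / 2} ∪
        {n ∈ Icc 1 X | S / 4 ≤ #{q ∈ P | q ^ 2 ∣ n}} := by
    rw [← filter_or]
    refine monotone_filter_right _ fun n _ hn => ?_
    by_contra! hmany
    have hsplit : #{q ∈ P | q ∣ n} ≤
        #{q ∈ P | q ∣ n ∧ ¬ q ^ 2 ∣ n} + #{q ∈ P | q ^ 2 ∣ n} := by
      refine (card_le_card fun q hq => ?_).trans (card_union_le _ _)
      rw [← filter_or, mem_filter]
      rw [mem_filter] at hq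
      tauto
    have hsplit : (#{q ∈ P | q ∣ n} : ℝ) ≤
        #{q ∈ P | q ∣ n ∧ ¬ q ^ 2 ∣ n} + #{q ∈ P | q ^ 2 ∣ n} := by exact_mod_cast hsplit
    have hn : (#{q ∈ P | q ∣ n ∧ ¬ q ^ 2 ∣ n} : ℝ) < k := by exact_mod_cast hn
    linarith
  have hcard : (#{n ∈ Icc 1 X | #{q ∈ P | q ∣ n ∧ ¬ q ^ 2 ∣ n} < k} : ℝ) ≤
      #{n ∈ Icc 1 X | (#{q ∈ P | q ∣ n} : ℝ) ≤ S / 2} +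
        #{n ∈ Icc 1 X | S / 4 ≤ #{q ∈ P | q ^ 2 ∣ n}} := by
    exact_mod_cast (card_le_card hsub).trans (card_union_le _ _)
  refine hcard.trans ((add_le_add hfew hsquares).trans_eq ?_)
  field_simp
  ring

end DivisorCounts

/-! ### Divisors of `σ(n)` -/

section SigmaDivisibility

lemma pow_card_dvd_sigma {d n : ℕ} {T : Finset ℕ}
    (hT : ∀ q ∈ T, q.Prime ∧ d ∣ q + 1 ∧ q ∣ n ∧ ¬ q ^ 2 ∣ n) :
    d ^ #T ∣ ArithmeticFunction.sigma 1 n := by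
  rcases eq_or_ne n 0 with rfl | hn
  · simp
  rw [ArithmeticFunction.isMultiplicative_sigma.multiplicative_factorization _ hn, ← prod_const]
  refine (prod_dvd_prod_of_dvd _ _ fun q hq => ?_).trans
    (prod_dvd_prod_of_subset T n.primeFactors _ fun q hq => ?_)
  · obtain ⟨hprime, hd, hqn, hq2⟩ := hT q hq
    have hone : n.factorization q = 1 := by
      rw [hprime.pow_dvd_iff_le_factorization hn] at hq2
      have := hprime.factorization_pos_of_dvd hn hqn
      omega
    simpa only [hone, pow_one, ArithmeticFunction.sigma_one_apply, hprime.sum_divisors,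
      add_comm] using hd
  · exact Nat.mem_primeFactors.mpr ⟨(hT q hq).1, (hT q hq).2.2.1, hn⟩

lemma dvd_iff_dvd_s_of_dvd_sigma1 {d n : ℕ} (h : d ∣ sigma1 n) : d ∣ n ↔ d ∣ s n := by
  have hle : n ≤ sigma1 n := by
    rcases eq_or_ne n 0 with rfl | hn
    · exact Nat.zero_le _
    · rw [sigma1, ArithmeticFunction.sigma_one_apply]
      exact single_le_sum (f := fun i => i) (fun _ _ => Nat.zero_le _) (Nat.mem_divisors_self n hn)
  rw [← Nat.sub_add_cancel hle] at h
  exact ⟨fun hn => (Nat.dvd_add_left hn).mp h, fun hs => (Nat.dvd_add_right hs).mp h⟩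

variable {N : ℕ}

lemma card_primesInClass_le (a : ZMod N) (n : ℕ) : #(primesInClass a n) ≤ n :=
  (card_filter_le _ _).trans (by simp)

lemma pairwise_coprime_primesInClass (a : ZMod N) (n : ℕ) :
    (primesInClass a n : Set ℕ).Pairwise Nat.Coprime := fun _ hp _ hq hne =>
  (Nat.coprime_primes (mem_filter.mp hp).2.1 (mem_filter.mp hq).2.1).mpr hne

lemma sum_one_div_sq_le_two (P : Finset ℕ) : ∑ q ∈ P, 1 / (q : ℝ) ^ 2 ≤ 2 := by
  calc ∑ q ∈ P, 1 / (q : ℝ) ^ 2 ≤ ∑' q : ℕ, 1 / (q : ℝ) ^ 2 :=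
        (Real.summable_one_div_nat_pow.mpr one_lt_two).sum_le_tsum P fun _ _ => by positivity
    _ = ∑' q : ℕ, (q : ℝ) ^ (-(2 : ℝ)) := by simp
    _ ≤ 2 := (tsum_rpow_neg_le one_lt_two).trans_eq (by norm_num)

lemma pow_dvd_sigma1_of_le_card {k n m : ℕ}
    (h : k ≤ #{q ∈ primesInClass (-1 : ZMod N) m | q ∣ n ∧ ¬ q ^ 2 ∣ n}) :
    N ^ k ∣ sigma1 n := by
  refine (pow_dvd_pow N h).trans (pow_card_dvd_sigma fun q hq => ?_)
  obtain ⟨hq, hqn⟩ := mem_filter.mp hq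
  obtain ⟨-, hprime, hclass⟩ := mem_filter.mp hq
  refine ⟨hprime, (ZMod.natCast_eq_zero_iff _ _).mp ?_, hqn⟩
  rw [Nat.cast_succ, hclass, neg_add_cancel]

lemma eventually_card_not_pow_dvd_sigma1_le : ∀ᶠ x : ℝ in atTop, ∀ k N : ℕ, 1 ≤ N →
    28 * (N : ℝ) ^ 2 ≤ Real.log (Real.log x) → 16 * (k : ℝ) * N ≤ Real.log (Real.log x) →
      (#{n ∈ Icc 1 ⌊x⌋₊ | ¬ N ^ k ∣ sigma1 n} : ℝ) ≤ 80 * N * x / Real.log (Real.log x) := by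
  have hloglog := Real.tendsto_log_atTop.comp Real.tendsto_log_atTop
  filter_upwards [hloglog.eventually eventually_le_sum_primesInClass,
    hloglog.eventually_gt_atTop 0, eventually_gt_atTop 1] with x hx hY hx1 k N hN hNY hkY
  simp only [Function.comp_apply] at hx hY
  have : NeZero N := ⟨by omega⟩
  have hsum := hx N (-1) (by ring) hNY
  rw [Real.exp_log (Real.log_pos hx1), Real.exp_log (by linarith)] at hsum
  set Y := Real.log (Real.log x)
  set P := primesInClass (-1 : ZMod N) ⌊x⌋₊
  have : (0 : ℝ) < N := by exact_mod_cast hN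
  have hk : 4 * (k : ℝ) ≤ ∑ q ∈ P, 1 / (q : ℝ) := by
    refine le_trans ?_ hsum
    rw [le_div_iff₀ (by positivity)]
    linarith
  have hfloor : (⌊x⌋₊ : ℝ) ≤ x := Nat.floor_le (by linarith)
  have hcard : (#P : ℝ) ≤ x :=
    (Nat.cast_le.mpr (card_primesInClass_le _ _)).trans hfloor
  calc (#{n ∈ Icc 1 ⌊x⌋₊ | ¬ N ^ k ∣ sigma1 n} : ℝ)
      ≤ #{n ∈ Icc 1 ⌊x⌋₊ | #{q ∈ P | q ∣ n ∧ ¬ q ^ 2 ∣ n} < k} := by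
        gcongr with n _
        contrapose!
        exact pow_dvd_sigma1_of_le_card
    _ ≤ ((4 + 4 * 2) * ⌊x⌋₊ + 8 * #P) / ∑ q ∈ P, 1 / (q : ℝ) :=
        card_filter_card_exactly_dvd_lt_le (pairwise_coprime_primesInClass _ _)
          (sum_one_div_sq_le_two P) _ ((by positivity : 0 < Y / (4 * N)).trans_le hsum) hk
    _ ≤ ((4 + 4 * 2) * x + 8 * x) / (Y / (4 * N)) := by gcongr
    _ = 80 * N * x / Y := by
        field_simp
        ring

end SigmaDivisibility

/-! ### Exceptional sets of density zero -/

section NegligibleSets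

lemma isLittleO_rpow_self {r : ℝ} (hr : r < 1) : (fun L : ℝ => L ^ r) =o[atTop] fun L : ℝ => L := by
  refine isLittleO_of_tendsto' ((eventually_ne_atTop 0).mono fun L hL h => absurd h hL)
    ((tendsto_rpow_neg_atTop (sub_pos.mpr hr)).congr' ?_)
  filter_upwards [eventually_gt_atTop 0] with L hL
  rw [neg_sub, Real.rpow_sub_one hL.ne']

/-- `Negligible P` says that, as `x → ∞`, only `o(x)` of the integers `1 ≤ n ≤ x` satisfy `P x n`;
the property may depend on the cut-off `x`. -/
def Negligible (P : ℝ → ℕ → Prop) : Prop :=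
  (fun x : ℝ => (#{n ∈ Icc 1 ⌊x⌋₊ | P x n} : ℝ)) =o[atTop] fun x : ℝ => x

variable {P Q : ℝ → ℕ → Prop} {y : ℝ → ℝ} {k : ℕ}

lemma Negligible.mono (hQ : Negligible Q) (h : ∀ x n, P x n → Q x n) : Negligible P := by
  refine IsBigO.trans_isLittleO (IsBigO.of_norm_le fun x => ?_) hQ
  rw [Real.norm_natCast]
  gcongr with n _
  exact h x n

lemma Negligible.or (hP : Negligible P) (hQ : Negligible Q) :
    Negligible fun x n => P x n ∨ Q x n := by
  refine IsBigO.trans_isLittleO (IsBigO.of_norm_le fun x => ?_) (hP.add hQ)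
  rw [Real.norm_natCast]
  simp only [filter_or]
  exact_mod_cast card_union_le _ _

lemma card_exists_le_sum {Q : ℕ → ℕ → Prop} {X : ℕ} (D : Finset ℕ) :
    (#{n ∈ Icc 1 X | ∃ d ∈ D, Q d n} : ℝ) ≤ ∑ d ∈ D, (#{n ∈ Icc 1 X | Q d n} : ℝ) := by
  have hunion : {n ∈ Icc 1 X | ∃ d ∈ D, Q d n} = D.biUnion fun d => {n ∈ Icc 1 X | Q d n} := by
    ext n
    simp only [mem_filter, mem_biUnion]
    tauto
  rw [hunion]
  exact_mod_cast card_biUnion_le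

lemma card_exists_sq_dvd_le (X M : ℕ) :
    (#{n ∈ Icc 1 X | ∃ d, M < d ∧ d ^ 2 ∣ n} : ℝ) ≤ 2 / (M + 1) * X := by
  calc (#{n ∈ Icc 1 X | ∃ d, M < d ∧ d ^ 2 ∣ n} : ℝ)
      ≤ #{n ∈ Icc 1 X | ∃ d ∈ Ioo M (X + 1), d ^ 2 ∣ n} := by
        refine Nat.cast_le.mpr (card_le_card fun n hn => ?_)
        obtain ⟨hnX, d, hMd, hd⟩ := mem_filter.mp hn
        have hnX' := mem_Icc.mp hnX
        have hdn : d ≤ n := Nat.le_of_dvd hnX'.1 ((dvd_pow_self d two_ne_zero).trans hd)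
        exact mem_filter.mpr ⟨hnX, d, mem_Ioo.mpr ⟨hMd, by omega⟩, hd⟩
    _ ≤ ∑ d ∈ Ioo M (X + 1), (#{n ∈ Icc 1 X | d ^ 2 ∣ n} : ℝ) := by
        convert card_exists_le_sum _
    _ ≤ ∑ d ∈ Ioo M (X + 1), ((d : ℝ) ^ 2)⁻¹ * X := by
        refine sum_le_sum fun d _ => (card_multiples_le X (d ^ 2)).trans_eq ?_
        rw [Nat.cast_pow, div_eq_inv_mul]
    _ ≤ 2 / (M + 1) * X := by
        rw [← sum_mul]
        gcongr
        exact sum_Ioo_inv_sq_le M (X + 1)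

lemma negligible_large_pow_dvd (hk : 2 ≤ k) (hy : Tendsto y atTop atTop) :
    Negligible fun x n => ∃ d : ℕ, y x < ((d ^ k : ℕ) : ℝ) ∧ d ^ k ∣ n := by
  refine isLittleO_iff.mpr fun ε hε => ?_
  obtain ⟨M, hM⟩ := exists_nat_gt (2 / ε)
  filter_upwards [hy.eventually_ge_atTop ((M ^ k : ℕ) : ℝ), eventually_gt_atTop 0] with x hyx hx
  rw [Real.norm_natCast, Real.norm_of_nonneg hx.le]
  calc (#{n ∈ Icc 1 ⌊x⌋₊ | ∃ d : ℕ, y x < ((d ^ k : ℕ) : ℝ) ∧ d ^ k ∣ n} : ℝ)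
      ≤ #{n ∈ Icc 1 ⌊x⌋₊ | ∃ d, M < d ∧ d ^ 2 ∣ n} := by
        refine Nat.cast_le.mpr (card_le_card (monotone_filter_right _ ?_))
        rintro n - ⟨d, hyd, hd⟩
        exact ⟨d, lt_of_pow_lt_pow_left' k (by exact_mod_cast hyx.trans_lt hyd),
          (pow_dvd_pow d hk).trans hd⟩
    _ ≤ 2 / (M + 1) * ⌊x⌋₊ := card_exists_sq_dvd_le _ M
    _ ≤ ε * x := by
        gcongr
        · rw [div_le_iff₀ (by positivity)]
          rw [div_lt_iff₀ hε] at hM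
          linarith
        · exact Nat.floor_le hx.le

lemma sum_card_not_pow_dvd_sigma1_le {x T : ℝ} (hx : 0 ≤ x) (hT : 0 ≤ T)
    (hL : 0 ≤ Real.log (Real.log x)) (hcard : ∀ d : ℕ, 1 ≤ d → (d : ℝ) ^ 2 ≤ T →
      (#{n ∈ Icc 1 ⌊x⌋₊ | ¬ d ^ k ∣ sigma1 n} : ℝ) ≤ 80 * d * x / Real.log (Real.log x)) :
    ∑ d ∈ Icc 1 ⌊√T⌋₊, (#{n ∈ Icc 1 ⌊x⌋₊ | ¬ d ^ k ∣ sigma1 n} : ℝ) ≤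
      80 * T * x / Real.log (Real.log x) := by
  set L := Real.log (Real.log x)
  have hle : ∀ d ∈ Icc 1 ⌊√T⌋₊, (d : ℝ) ≤ √T := fun d hd =>
    (Nat.le_floor_iff (Real.sqrt_nonneg T)).mp (mem_Icc.mp hd).2
  calc ∑ d ∈ Icc 1 ⌊√T⌋₊, (#{n ∈ Icc 1 ⌊x⌋₊ | ¬ d ^ k ∣ sigma1 n} : ℝ)
      ≤ ∑ d ∈ Icc 1 ⌊√T⌋₊, 80 * √T * x / L := by
        refine sum_le_sum fun d hd => ?_
        refine (hcard d (mem_Icc.mp hd).1 ((Real.le_sqrt' ?_).mp (hle d hd))).trans ?_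
        · exact_mod_cast (mem_Icc.mp hd).1
        · have := hle d hd
          gcongr
    _ = ⌊√T⌋₊ * (80 * √T * x / L) := by simp
    _ ≤ √T * (80 * √T * x / L) := by
        gcongr
        exact Nat.floor_le (Real.sqrt_nonneg T)
    _ = 80 * T * x / L := by
        rw [← Real.mul_self_sqrt hT, Real.sqrt_mul_self (Real.sqrt_nonneg T)]
        ring

lemma negligible_not_pow_dvd_sigma1 (hk : 2 ≤ k) (hy : y =o[atTop] fun x => Real.log (Real.log x)) :
    Negligible fun x n => ∃ d : ℕ, 1 ≤ d ∧ ((d ^ k : ℕ) : ℝ) ≤ y x ∧ ¬ d ^ k ∣ sigma1 n := by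
  have hloglog := Real.tendsto_log_atTop.comp Real.tendsto_log_atTop
  refine isLittleO_iff.mpr fun ε hε => ?_
  filter_upwards [eventually_card_not_pow_dvd_sigma1_le, hy.bound (by positivity : 0 < ε / 80),
    hy.bound (by positivity : (0 : ℝ) < 1 / (28 + 16 * k)), hloglog.eventually_gt_atTop 0,
    eventually_gt_atTop 0] with x hcard hyε hyk hL hx
  simp only [Function.comp_apply] at hL
  rw [Real.norm_of_nonneg hL.le] at hyε hyk
  rw [Real.norm_natCast, Real.norm_of_nonneg hx.le]
  set L := Real.log (Real.log x)
  set T := ‖y x‖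
  have hTL : (28 + 16 * k) * T ≤ L := by
    rwa [one_div_mul_eq_div, le_div_iff₀' (by positivity)] at hyk
  calc (#{n ∈ Icc 1 ⌊x⌋₊ | ∃ d : ℕ, 1 ≤ d ∧ ((d ^ k : ℕ) : ℝ) ≤ y x ∧ ¬ d ^ k ∣ sigma1 n} : ℝ)
      ≤ #{n ∈ Icc 1 ⌊x⌋₊ | ∃ d ∈ Icc 1 ⌊√T⌋₊, ¬ d ^ k ∣ sigma1 n} := by
        refine Nat.cast_le.mpr (card_le_card (monotone_filter_right _ ?_))
        rintro n - ⟨d, hd, hdy, hdn⟩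
        refine ⟨d, mem_Icc.mpr ⟨hd, Nat.le_floor (Real.le_sqrt_of_sq_le ?_)⟩, hdn⟩
        calc (d : ℝ) ^ 2 ≤ ((d ^ k : ℕ) : ℝ) := by exact_mod_cast Nat.pow_le_pow_right hd hk
          _ ≤ T := hdy.trans (le_abs_self _)
    _ ≤ ∑ d ∈ Icc 1 ⌊√T⌋₊, (#{n ∈ Icc 1 ⌊x⌋₊ | ¬ d ^ k ∣ sigma1 n} : ℝ) := by
        convert card_exists_le_sum _
    _ ≤ 80 * T * x / L := by
        refine sum_card_not_pow_dvd_sigma1_le hx.le (norm_nonneg _) hL.le fun d hd hdT => ?_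
        have hd' : (1 : ℝ) ≤ d := by exact_mod_cast hd
        have hkT : 16 * (k : ℝ) * d ≤ 16 * k * T := by
          gcongr
          nlinarith
        have hkT' : 0 ≤ 16 * (k : ℝ) * T := by positivity
        have hT : 0 ≤ T := norm_nonneg _
        exact hcard k d hd (by linarith) (by linarith)
    _ ≤ 80 * (ε / 80 * L) * x / L := by gcongr
    _ = ε * x := by field_simp

end NegligibleSets

theorem conjecture_reduction_general {k : ℕ} (hk : 2 ≤ k) {y : ℝ → ℝ} (hy : Tendsto y atTop atTop)
    (hyo : y =o[atTop] fun x => Real.log (Real.log x))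
    (H : Negligible fun x n => ∃ p : ℕ, p.Prime ∧ y x < ((p ^ k : ℕ) : ℝ) ∧ p ^ k ∣ s n) :
    Negligible fun _ n => ¬ (KFree k n ↔ KFree k (s n)) := by
  refine ((H.or (negligible_large_pow_dvd hk hy)).or
    (negligible_not_pow_dvd_sigma1 hk hyo)).mono fun x n => ?_
  contrapose!
  rintro ⟨⟨hlarge_s, hlarge⟩, hsmall⟩
  refine forall₂_congr fun p hp => not_congr ?_
  rcases le_or_gt ((p ^ k : ℕ) : ℝ) (y x) with hle | hlt
  · exact dvd_iff_dvd_s_of_dvd_sigma1 (hsmall p hp.one_le hle)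
  · exact iff_of_false (hlarge p hlt) (hlarge_s p hp hlt)

theorem conjecture_reduction (k : ℕ) (hk : 2 ≤ k)
    (H : (fun x : ℝ => (((Finset.Icc 1 ⌊x⌋₊).filter
        (fun n => ∃ p : ℕ, p.Prime ∧
          (Real.log (Real.log x)) ^ (0.9 : ℝ) < ((p ^ k : ℕ) : ℝ) ∧ p ^ k ∣ s n)).card : ℝ))
      =o[atTop] (fun x : ℝ => x)) :
    (fun x : ℝ => (((Finset.Icc 1 ⌊x⌋₊).filter
        (fun n => ¬ (KFree k n ↔ KFree k (s n)))).card : ℝ))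
      =o[atTop] (fun x : ℝ => x) := by
  have hloglog := Real.tendsto_log_atTop.comp Real.tendsto_log_atTop
  have hneg := conjecture_reduction_general hk ((tendsto_rpow_atTop (by norm_num)).comp hloglog)
    ((isLittleO_rpow_self (by norm_num)).comp_tendsto hloglog) H
  rw [Negligible] at hneg
  convert hneg
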